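/- arXiv:math/0605318 — 2 statements merged into one kernel-verified Lean document; each statement's English description precedes it below -/
import Mathlib

section
/- An algebraic integer d lies in some cyclotomic field if and only if the Galois group of the splitting field over ℚ of its minimal polynomial is abelian. -/
open Polynomial

/-! The substance is the Kronecker–Weber theorem. An abelian field whose degree is not a prime
power is a compositum of two smaller fixed fields, so let `K` be abelian of degree `p ^ m`. Put
`n = p ^ (m + 3) * r`, where `r` is the product of the primes other than `p` that ramify in `K`,
and `M = K(ζ_n)`. It suffices to show `[M : ℚ] ≤ φ(n)`, for then `M = ℚ(ζ_n)`.

By Minkowski's theorem the inertia groups generate `Gal(M/ℚ)`. Let `H` be generated by those at the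
primes `q ∣ r`. They are tame, and since they commute with Frobenius they have order at most
`q - 1`; hence `|H| ≤ φ(r)`. Since `p ^ m` kills `Gal(K/ℚ)`, one can lift generators of
`(ℤ/p ^ (m + 3))ˣ` (for `p = 2`: complex conjugation and `5`) to a subgroup `C` of `Gal(M/ℚ)` of
order at most `φ(p ^ (m + 3))`, with the same action on `p ^ 3`-th roots of unity as `Gal(M/ℚ)`.

Then `H` and `C` generate `Gal(M/ℚ)`. Otherwise Kummer theory over `ℚ(ζ_p)` provides `α ∉ ℚ(ζ_p)`
with `α ^ p ∈ ℚ(ζ_p)`, fixed by the elements of `H ⊔ C` that fix `ζ_p`. Since `M` is abelian,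
`α ^ p` is an eigenvector for `Gal(ℚ(ζ_p)/ℚ)` modulo `p`-th powers. For odd `p`, congruences modulo
powers of `1 - ζ_p` then show that a power of `α ^ p` prime to `p` becomes congruent to `1` modulo
`(1 - ζ_p) ^ p` after multiplication by a `p`-th power and a power of `ζ_p`; for `p = 2` the
factors `-1` and `2` play the part of `ζ_p`. Inertia elements at `p` that fix `ζ_(p ^ 3)` therefore
fix `α`, and as `H`, `C` and these elements generate `Gal(M/ℚ)`, everything that fixes `ζ_p` fixes
`α`, a contradiction. -/

namespace KroneckerWeber

open NumberField

section Inertia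

open scoped Pointwise

variable {R G : Type*} [CommRing R] [Group G] [MulSemiringAction G R] {P : Ideal R} {g : G}

theorem smul_mem_pow_of_smul_eq (hg : g • P = P) {n : ℕ} {x : R} (hx : x ∈ P ^ n) :
    g • x ∈ P ^ n := by
  rw [← hg, ← smul_pow']
  exact Ideal.smul_mem_pointwise_smul g x _ hx

theorem smul_eq_of_mem_inertia (hg : g ∈ P.inertia G) : g • P = P :=
  Ideal.inertia_le_stabilizer P hg

theorem smul_eq_of_smul_sub_pow_mem [P.IsPrime] {q : ℕ} (hq : q ≠ 0)
    (hg : ∀ x, g • x - x ^ q ∈ P) : g • P = P := by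
  have hle : g⁻¹ • P ≤ P := fun y hy => by
    have hgy : g • y ∈ P := Ideal.mem_inv_pointwise_smul_iff.mp hy
    exact ‹P.IsPrime›.mem_of_pow_mem q (by simpa using P.sub_mem hgy (hg y))
  have hge : P ≤ g⁻¹ • P := fun y hy => Ideal.mem_inv_pointwise_smul_iff.mpr <| by
    simpa using P.add_mem (hg y) (P.pow_mem_of_mem hy q (Nat.pos_of_ne_zero hq))
  exact inv_smul_eq_iff.mp (le_antisymm hle hge) |>.symm

theorem smul_eq_self_of_pow_eq_one_of_mem_inertia [IsDomain R] [P.IsPrime]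
    (hg : g ∈ P.inertia G) {z : R} {r : ℕ} (hz : z ^ r = 1) (hr : (r : R) ∉ P) : g • z = z := by
  have hgz : (g • z) ^ r = z ^ r := by rw [← smul_pow', hz, smul_one]
  by_contra hne
  have hsum : ∑ i ∈ Finset.range r, (g • z) ^ i * z ^ (r - 1 - i) = 0 := by
    refine (mul_eq_zero.mp ?_).resolve_right (sub_ne_zero.mpr hne)
    rw [Commute.geom_sum₂_mul (Commute.all _ _), hgz, sub_self]
  have hmk : Ideal.Quotient.mk P (g • z) = Ideal.Quotient.mk P z := Ideal.Quotient.eq.mpr (hg z)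
  have hr0 : r ≠ 0 := fun h => hr (by simp [h])
  have hmem : (r : R) * z ^ (r - 1) ∈ P := by
    rw [← Ideal.Quotient.eq_zero_iff_mem, ← map_zero (Ideal.Quotient.mk P), ← hsum]
    simp only [map_mul, map_sum, map_pow, map_natCast, hmk]
    exact (geom_sum₂_self _ _).symm
  refine hr (((‹P.IsPrime›.mem_or_mem hmem).resolve_right fun hzP => ?_))
  refine ‹P.IsPrime›.ne_top ((Ideal.eq_top_iff_one P).mpr ?_)
  rw [← hz]
  exact P.pow_mem_of_mem (‹P.IsPrime›.mem_of_pow_mem _ hzP) r (Nat.pos_of_ne_zero hr0)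

theorem smul_sub_mem_pow_succ (hg : g ∈ P.inertia G) (hg2 : ∀ y ∈ P, g • y - y ∈ P ^ 2)
    {n : ℕ} {y : R} (hy : y ∈ P ^ n) : g • y - y ∈ P ^ (n + 1) := by
  induction n generalizing y with
  | zero => simpa using hg y
  | succ n ih =>
    rw [pow_succ] at hy
    induction hy using Submodule.mul_induction_on' with
    | mem_mul_mem a ha b hb =>
      have hgb : g • b ∈ P := by
        simpa using smul_mem_pow_of_smul_eq (n := 1) (smul_eq_of_mem_inertia hg) (by simpa using hb)
      have hsplit : g • (a * b) - a * b = (g • a - a) * (g • b) + a * (g • b - b) := by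
        rw [smul_mul']; ring
      rw [hsplit]
      refine add_mem ?_ ?_
      · rw [pow_succ]; exact Ideal.mul_mem_mul (ih ha) hgb
      · rw [add_assoc, pow_add]; exact Ideal.mul_mem_mul ha (hg2 b hb)
    | add a _ b _ ha hb =>
      rw [smul_add, add_sub_add_comm]
      exact add_mem ha hb

-- Modulo `P ^ (n + 1)`, the map `j ↦ g ^ j • x - x` is additive in `j`.
theorem pow_smul_sub_sub_mem {n : ℕ} (hg : ∀ y ∈ P ^ n, g • y - y ∈ P ^ (n + 1)) {x : R}
    (hx : g • x - x ∈ P ^ n) (j : ℕ) : (g ^ j) • x - x - j * (g • x - x) ∈ P ^ (n + 1) := by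
  induction j with
  | zero => simp
  | succ j ih =>
    have hj : (g ^ j) • x - x ∈ P ^ n := by
      have := add_mem (Ideal.pow_le_pow_right n.le_succ ih) (Ideal.mul_mem_left _ (j : R) hx)
      simpa using this
    have hsplit : (g ^ (j + 1)) • x - x - ((j + 1 : ℕ) : R) * (g • x - x) =
        (g • ((g ^ j) • x - x) - ((g ^ j) • x - x)) +
          ((g ^ j) • x - x - j * (g • x - x)) := by
      rw [pow_succ', mul_smul, smul_sub]; push_cast; ring
    rw [hsplit]
    exact add_mem (hg _ hj) ih

theorem eq_one_of_mem_inertia_of_pow_eq_one [IsDomain R] [IsNoetherianRing R] [FaithfulSMul G R]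
    (hP : P ≠ ⊤) (hg : g ∈ P.inertia G) (hg2 : ∀ y ∈ P, g • y - y ∈ P ^ 2) {q k : ℕ}
    (hq : (q : R) ∈ P) (hk : k.Coprime q) (hgk : g ^ k = 1) : g = 1 := by
  have hpow (n : ℕ) (x : R) : g • x - x ∈ P ^ n := by
    induction n with
    | zero => simp
    | succ n ih =>
      have hk' : (k : R) * (g • x - x) ∈ P ^ (n + 1) := by
        simpa [hgk] using
          pow_smul_sub_sub_mem (fun y hy => smul_sub_mem_pow_succ hg hg2 hy) ih k
      have hq' : (q : R) * (g • x - x) ∈ P ^ (n + 1) := by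
        rw [pow_succ']; exact Ideal.mul_mem_mul hq ih
      obtain ⟨a, b, hab⟩ := Nat.isCoprime_iff_coprime.mpr hk |>.map (Int.castRingHom R)
      have hbez : g • x - x = a * (k * (g • x - x)) + b * (q * (g • x - x)) := by
        simp only [eq_intCast, Int.cast_natCast] at hab
        linear_combination (-(g • x - x)) * hab
      rw [hbez]
      exact add_mem (Ideal.mul_mem_left _ _ hk') (Ideal.mul_mem_left _ _ hq')
  refine eq_of_smul_eq_smul (α := R) fun x => ?_
  have hbot : g • x - x ∈ ⨅ n : ℕ, P ^ n := by
    simp only [Submodule.mem_iInf]; exact fun n => hpow n x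
  rw [Ideal.iInf_pow_eq_bot_of_isDomain P hP, Ideal.mem_bot] at hbot
  rw [one_smul, sub_eq_zero.mp hbot]

theorem notMem_of_smul_sub_mul_mem_sq {π : R} (hg : g • P = P) (hπ : π ∈ P)
    (hπ2 : π ∉ P ^ 2) {u : R} (hu : g • π - π * u ∈ P ^ 2) : u ∉ P := by
  intro huP
  have hgπ : g • π ∈ P ^ 2 := by
    rw [← sub_add_cancel (g • π) (π * u)]
    exact add_mem hu (pow_two P ▸ Ideal.mul_mem_mul hπ huP)
  apply hπ2
  simpa using smul_mem_pow_of_smul_eq (inv_smul_eq_iff.mpr hg.symm) hgπ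

end Inertia

section TameInertia

open scoped Pointwise

variable {R G : Type*} [CommRing R] [IsDedekindDomain R] [Group G] [MulSemiringAction G R]
  {P : Ideal R} {π : R} {g d : G} {q : ℕ}

theorem exists_sub_mul_mem_sq (hP : P ≠ ⊥) [P.IsPrime] (hπ : π ∈ P) (hπ2 : π ∉ P ^ 2) {y : R}
    (hy : y ∈ P) : ∃ t, y - π * t ∈ P ^ 2 := by
  obtain ⟨t, e, he, h⟩ := Ideal.exists_mul_add_mem_pow_succ (P := P) (i := 1) hP π y
    (by simpa using hπ) hπ2 (by simpa using hy)
  exact ⟨t, by simpa [← h] using he⟩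

-- A Frobenius element sends `g • π ≡ π * u` to `d • g • π ≡ (d • π) * u ^ q`, and it commutes
-- with `g`.
theorem pow_sub_mem_of_smul_sub_mul_mem_sq (hP : P ≠ ⊥) [P.IsPrime] (hπ : π ∈ P) (hπ2 : π ∉ P ^ 2)
    (hdP : d • P = P) (hd : ∀ x, d • x - x ^ q ∈ P) (hg : g ∈ P.inertia G) (hgd : Commute g d)
    {u : R} (hu : g • π - π * u ∈ P ^ 2) : u ^ q - u ∈ P := by
  have smul_mem {h : G} (hh : h • P = P) {y : R} (hy : y ∈ P) : h • y ∈ P := by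
    simpa using smul_mem_pow_of_smul_eq (n := 1) hh (by simpa using hy)
  have hgP := smul_eq_of_mem_inertia hg
  obtain ⟨t, ht⟩ := exists_sub_mul_mem_sq hP hπ hπ2 (smul_mem hdP hπ)
  have hdg : d • g • π - π * t * u ^ q ∈ P ^ 2 := by
    have h₁ := smul_mem_pow_of_smul_eq hdP hu
    have h₂ : (d • π) * (d • u - u ^ q) ∈ P ^ 2 :=
      pow_two P ▸ Ideal.mul_mem_mul (smul_mem hdP hπ) (hd u)
    have h₃ := add_mem (add_mem h₁ h₂) (Ideal.mul_mem_right (u ^ q) _ ht)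
    rw [smul_sub, smul_mul'] at h₃
    convert h₃ using 1; ring
  have hgd' : g • d • π - π * t * u ∈ P ^ 2 := by
    have h₁ := smul_mem_pow_of_smul_eq hgP ht
    have h₂ : (g • π) * (g • t - t) ∈ P ^ 2 :=
      pow_two P ▸ Ideal.mul_mem_mul (smul_mem hgP hπ) (hg t)
    have h₃ := add_mem (add_mem h₁ h₂) (Ideal.mul_mem_right t _ hu)
    rw [smul_sub, smul_mul'] at h₃
    convert h₃ using 1; ring
  rw [← mul_smul, hgd.eq, mul_smul] at hgd'
  have hmul : π * (t * (u ^ q - u)) ∈ P ^ 2 := by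
    convert sub_mem hgd' hdg using 1; ring
  exact (‹P.IsPrime›.mem_or_mem (Ideal.mem_prime_of_mul_mem_pow (i := 1) hP hπ2 hmul)).resolve_left
    (notMem_of_smul_sub_mul_mem_sq hdP hπ hπ2 ht)

theorem smul_sub_mem_sq_of_smul_sub_mem_sq (hP : P ≠ ⊥) [P.IsPrime] (hπ : π ∈ P) (hπ2 : π ∉ P ^ 2)
    (hg : g ∈ P.inertia G) (hgπ : g • π - π ∈ P ^ 2) {y : R} (hy : y ∈ P) :
    g • y - y ∈ P ^ 2 := by
  obtain ⟨s, hs⟩ := exists_sub_mul_mem_sq hP hπ hπ2 hy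
  have h₁ := smul_mem_pow_of_smul_eq (smul_eq_of_mem_inertia hg) hs
  have h₂ : (g • π - π) * (g • s) ∈ P ^ 2 := Ideal.mul_mem_right _ _ hgπ
  have h₃ : π * (g • s - s) ∈ P ^ 2 := pow_two P ▸ Ideal.mul_mem_mul hπ (hg s)
  rw [smul_sub, smul_mul'] at h₁
  convert sub_mem (add_mem (add_mem h₁ h₂) h₃) hs using 1; ring

theorem eq_of_smul_sub_mul_mem_sq [FaithfulSMul G R] (hP : P ≠ ⊥) [P.IsPrime] (hπ : π ∈ P)
    (hπ2 : π ∉ P ^ 2) (hq : (q : R) ∈ P)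
    (hcop : ∀ g ∈ P.inertia G, ∃ k : ℕ, k.Coprime q ∧ g ^ k = 1) {h : G} (hg : g ∈ P.inertia G)
    (hh : h ∈ P.inertia G) {u v : R} (hu : g • π - π * u ∈ P ^ 2) (hv : h • π - π * v ∈ P ^ 2)
    (huv : u - v ∈ P) : g = h := by
  have hgh : g • π - h • π ∈ P ^ 2 := by
    have h₁ : π * (u - v) ∈ P ^ 2 := pow_two P ▸ Ideal.mul_mem_mul hπ huv
    convert add_mem (sub_mem hu hv) h₁ using 1; ring
  have hmem : h⁻¹ * g ∈ P.inertia G := mul_mem (inv_mem hh) hg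
  have hπ' : (h⁻¹ * g) • π - π ∈ P ^ 2 := by
    simpa [smul_sub, mul_smul] using
      smul_mem_pow_of_smul_eq (smul_eq_of_mem_inertia (inv_mem hh)) hgh
  obtain ⟨k, hk, hgk⟩ := hcop _ hmem
  exact (inv_mul_eq_one.mp (eq_one_of_mem_inertia_of_pow_eq_one ‹P.IsPrime›.ne_top hmem
    (fun y hy => smul_sub_mem_sq_of_smul_sub_mem_sq hP hπ hπ2 hmem hπ' hy) hq hk hgk)).symm

-- The action on a uniformizer gives a character of the inertia group with values in the residue
-- field, and commuting with a Frobenius element makes its values `(q - 1)`-st roots of unity.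
theorem card_inertia_le_sub_one [FaithfulSMul G R] [P.IsMaximal] (hP : P ≠ ⊥) (hq : 1 < q)
    (hqP : (q : R) ∈ P) (hd : ∀ x, d • x - x ^ q ∈ P) (hcomm : ∀ g ∈ P.inertia G, Commute g d)
    (hcop : ∀ g ∈ P.inertia G, ∃ k : ℕ, k.Coprime q ∧ g ^ k = 1) :
    Nat.card (P.inertia G) ≤ q - 1 := by
  obtain ⟨π, hπ, hπ2⟩ : ∃ π ∈ P, π ∉ P ^ 2 := by
    simpa using Ideal.exists_mem_pow_notMem_pow_succ P hP Ideal.IsPrime.ne_top' 1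
  have hdP := smul_eq_of_smul_sub_pow_mem (Nat.ne_zero_of_lt hq) hd
  have hchar (g : P.inertia G) : ∃ u, g.1 • π - π * u ∈ P ^ 2 := by
    refine exists_sub_mul_mem_sq hP hπ hπ2 ?_
    simpa using smul_mem_pow_of_smul_eq (n := 1) (smul_eq_of_mem_inertia g.2) (by simpa using hπ)
  choose u hu using hchar
  let := Ideal.Quotient.field P
  have hroot (g : P.inertia G) : Ideal.Quotient.mk P (u g) ∈ nthRoots (q - 1) (1 : R ⧸ P) := by
    have hne : Ideal.Quotient.mk P (u g) ≠ 0 := fun h =>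
      notMem_of_smul_sub_mul_mem_sq (smul_eq_of_mem_inertia g.2) hπ hπ2 (hu g)
        (Ideal.Quotient.eq_zero_iff_mem.mp h)
    have hpow : Ideal.Quotient.mk P (u g) ^ q = Ideal.Quotient.mk P (u g) := by
      rw [← map_pow]
      exact Ideal.Quotient.eq.mpr (pow_sub_mem_of_smul_sub_mul_mem_sq hP hπ hπ2 hdP hd g.2
        (hcomm g g.2) (hu g))
    rw [mem_nthRoots (Nat.sub_pos_of_lt hq)]
    apply mul_right_cancel₀ hne
    rw [← pow_succ, Nat.sub_add_cancel hq.le, hpow, one_mul]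
  classical
  let toRoots (g : P.inertia G) : (nthRoots (q - 1) (1 : R ⧸ P)).toFinset :=
    ⟨Ideal.Quotient.mk P (u g), Multiset.mem_toFinset.mpr (hroot g)⟩
  have hinj : Function.Injective toRoots := fun g h hgh =>
    Subtype.ext <| eq_of_smul_sub_mul_mem_sq hP hπ hπ2 hqP hcop g.2 h.2 (hu g) (hu h)
      (Ideal.Quotient.eq.mp (congrArg Subtype.val hgh))
  calc Nat.card (P.inertia G)
      ≤ Nat.card (nthRoots (q - 1) (1 : R ⧸ P)).toFinset := Nat.card_le_card_of_injective _ hinj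
    _ = (nthRoots (q - 1) (1 : R ⧸ P)).toFinset.card := Nat.card_eq_finsetCard _
    _ ≤ Multiset.card (nthRoots (q - 1) (1 : R ⧸ P)) := Multiset.toFinset_card_le _
    _ ≤ q - 1 := card_nthRoots _ _

end TameInertia

section RootsOfUnity

variable {R : Type*} [CommRing R] [IsDomain R] {z β : R} {n : ℕ}

theorem exists_eq_pow_mul_of_pow_eq_pow [NeZero n] (hz : IsPrimitiveRoot z n) {x y : R}
    (h : x ^ n = y ^ n) : ∃ j < n, x = z ^ j * y := by
  have hprod := hz.pow_sub_pow_eq_prod_sub_mul x y (NeZero.pos n)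
  rw [h, sub_self, eq_comm, Finset.prod_eq_zero_iff] at hprod
  obtain ⟨ω, hω, hxy⟩ := hprod
  obtain ⟨j, hj, rfl⟩ := hz.eq_pow_of_pow_eq_one ((mem_nthRootsFinset (NeZero.pos n) 1).mp hω)
  exact ⟨j, hj, sub_eq_zero.mp hxy⟩

variable [IsIntegrallyClosed R]

-- The quotient `a / d` is a root of the monic polynomial `∏ i ∈ s, (X - c i) - x`.
theorem dvd_of_prod_sub_mul_eq_pow_mul {ι : Type*} {s : Finset ι} (hs : s.Nonempty) {a d x : R}
    {c : ι → R} (h : ∏ i ∈ s, (a - d * c i) = d ^ s.card * x) : d ∣ a := by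
  rcases eq_or_ne d 0 with rfl | hd
  · have ha : a ^ s.card = 0 := by simpa [hs.card_ne_zero] using h
    rw [eq_zero_of_pow_eq_zero ha]
  let K := FractionRing R
  let i := algebraMap R K
  have hd0 : i d ≠ 0 := by
    rwa [Ne, (injective_iff_map_eq_zero' i).mp (IsFractionRing.injective R K)]
  let f : R[X] := ∏ j ∈ s, (X - C (c j)) - C x
  have hf : f.Monic := by
    refine (monic_prod_of_monic _ _ fun j _ => monic_X_sub_C _).sub_of_left ?_
    refine degree_C_le.trans_lt ?_
    rw [← natDegree_pos_iff_degree_pos, natDegree_prod_of_monic _ _ fun j _ => monic_X_sub_C (c j)]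
    simpa using hs.card_pos
  have hroot : eval₂ i (i a / i d) f = 0 := by
    have hfac (j : ι) : i d * (i a / i d - i (c j)) = i (a - d * c j) := by
      rw [mul_sub, mul_div_cancel₀ _ hd0, map_sub, map_mul]
    have hmul : i d ^ s.card * ∏ j ∈ s, (i a / i d - i (c j)) = i d ^ s.card * i x := by
      rw [← Finset.prod_const, ← Finset.prod_mul_distrib, Finset.prod_congr rfl fun j _ => hfac j,
        ← map_prod, h, map_mul, map_pow, Finset.prod_const]
    simp only [f, eval₂_sub, eval₂_finsetProd, eval₂_X, eval₂_C]
    exact sub_eq_zero.mpr (mul_left_cancel₀ (pow_ne_zero _ hd0) hmul)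
  obtain ⟨y, hy⟩ := IsIntegrallyClosed.isIntegral_iff.mp (⟨f, hf, hroot⟩ : IsIntegral R _)
  refine ⟨y, IsFractionRing.injective R K ?_⟩
  rw [map_mul, hy]
  exact (mul_div_cancel₀ _ hd0).symm

theorem sub_one_dvd_sub_one_of_pow_dvd_pow_sub_one [NeZero n] (hz : IsPrimitiveRoot z n)
    (h : (z - 1) ^ n ∣ β ^ n - 1) : z - 1 ∣ β - 1 := by
  obtain ⟨x, hx⟩ := h
  have hdvd (ω : R) (hω : ω ∈ nthRootsFinset n (1 : R)) : ∃ c, ω - 1 = (z - 1) * c := by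
    obtain ⟨i, -, rfl⟩ := hz.eq_pow_of_pow_eq_one ((mem_nthRootsFinset (NeZero.pos n) 1).mp hω)
    exact sub_one_dvd_pow_sub_one z i
  choose! c hc using hdvd
  refine dvd_of_prod_sub_mul_eq_pow_mul (s := nthRootsFinset n (1 : R)) (c := c) (x := x)
    (Finset.card_pos.mp (by rw [hz.card_nthRootsFinset]; exact NeZero.pos n)) ?_
  calc ∏ ω ∈ nthRootsFinset n (1 : R), (β - 1 - (z - 1) * c ω)
      = ∏ ω ∈ nthRootsFinset n (1 : R), (β - ω) :=
        Finset.prod_congr rfl fun ω hω => by rw [← hc ω hω, sub_sub_sub_cancel_right]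
    _ = β ^ n - 1 := by simpa using (hz.pow_sub_pow_eq_prod_sub_mul β 1 (NeZero.pos n)).symm
    _ = (z - 1) ^ (nthRootsFinset n (1 : R)).card * x := by rw [hx, hz.card_nthRootsFinset]

-- If `g • β = z ^ j * β ≠ β`, then `β = 1 + (z - 1) * γ` turns `(z - 1) * (g • γ - γ)` into
-- `(z ^ j - 1) * β`; as `(z ^ j - 1) / (z - 1)` is a unit, `β` would lie in `P`.
theorem smul_eq_self_of_smul_pow_eq {G : Type*} [Group G] [MulSemiringAction G R] {P : Ideal R}
    [P.IsPrime] {g : G} (hg : g ∈ P.inertia G) {p : ℕ} [Fact p.Prime] (hz : IsPrimitiveRoot z p)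
    (hzP : z - 1 ∈ P) (hgz : g • z = z) (hgβ : g • β ^ p = β ^ p)
    (h : (z - 1) ^ p ∣ β ^ p - 1) : g • β = β := by
  have hp : p.Prime := Fact.out
  obtain ⟨γ, hγ⟩ := sub_one_dvd_sub_one_of_pow_dvd_pow_sub_one hz h
  have hβP : β ∉ P := fun hβ => ‹P.IsPrime›.ne_top <| (Ideal.eq_top_iff_one P).mpr <| by
    rw [← sub_sub_cancel β 1, hγ]
    exact P.sub_mem hβ (Ideal.mul_mem_right γ P hzP)
  obtain ⟨j, hj, hgj⟩ := exists_eq_pow_mul_of_pow_eq_pow hz (smul_pow' g β p ▸ hgβ)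
  rcases j.eq_zero_or_pos with rfl | hj0
  · simpa using hgj
  have hunit := hz.geom_sum_isUnit hp.two_le (Nat.coprime_of_lt_prime hj0.ne' hj hp).symm
  have hgγ : (∑ i ∈ Finset.range j, z ^ i) * β = g • γ - γ := by
    apply mul_left_cancel₀ (sub_ne_zero.mpr (hz.ne_one hp.one_lt))
    have hgβ' : g • (β - 1) = (z - 1) * (g • γ) := by
      rw [hγ, smul_mul', smul_sub, hgz, smul_one]
    rw [smul_sub, smul_one, hgj] at hgβ'
    linear_combination β * mul_geom_sum z j + hgβ' - hγ
  exact absurd ((Ideal.unit_mul_mem_iff_mem P hunit).mp (hgγ ▸ hg γ)) hβP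

end RootsOfUnity

section Congruence

variable {R : Type*} [CommRing R] {π : R} {φ : R →+* R} {s : R} {k t : ℕ}

theorem pow_succ_dvd_map_sub (hφ : ∀ x, π ∣ φ x - x) (hφπ : π ^ 2 ∣ φ π - s * π) {x : R}
    (hx : π ^ k ∣ x) : π ^ (k + 1) ∣ φ x - s ^ k * x := by
  obtain ⟨y, rfl⟩ := hx
  obtain ⟨v, hv⟩ := hφπ
  obtain ⟨u, hu⟩ := sub_dvd_pow_sub_pow (s + π * v) s k
  obtain ⟨e, he⟩ := hφ y
  have hφπ' : φ π = (s + π * v) * π := by linear_combination hv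
  refine ⟨v * u * φ y + s ^ k * e, ?_⟩
  rw [map_mul, map_pow, hφπ', mul_pow]
  linear_combination π ^ k * φ y * hu + π ^ k * s ^ k * he

theorem pow_succ_dvd_add_mul_sub_one (hφ : ∀ x, π ∣ φ x - x) (hφπ : π ^ 2 ∣ φ π - s * π) {b : R}
    (hk : k ≠ 0) (hb : π ^ k ∣ b - 1) (h : π ^ (k + 1) ∣ φ b * b ^ t - 1) :
    π ^ (k + 1) ∣ (s ^ k + t) * (b - 1) := by
  have hsq : π ^ (k + 1) ∣ (b - 1) ^ 2 :=
    (pow_dvd_pow π (by lia)).trans (pow_mul π k 2 ▸ pow_dvd_pow_of_dvd hb 2)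
  obtain ⟨m, hm⟩ := Polynomial.powAddExpansion 1 (b - 1) t
  have hφb := pow_succ_dvd_map_sub hφ hφπ hb
  rw [map_sub, map_one] at hφb
  have hsum := ((h.sub (hφb.mul_right (b ^ t))).sub (hsq.mul_right (m + s ^ k * (t + m * (b - 1)))))
  convert hsum using 1
  rw [one_pow, one_pow, mul_one, add_sub_cancel] at hm
  linear_combination (-1 - s ^ k * (b - 1)) * hm

variable {p : ℕ}

theorem dvd_pow_sub_self [Fact p.Prime] (hp : π ∣ p) (hint : ∀ x : R, ∃ n : ℤ, π ∣ x - n)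
    (x : R) : π ∣ x ^ p - x := by
  obtain ⟨n, hn⟩ := hint x
  have hnp : (p : R) ∣ n ^ p - n := by
    have h : (p : ℤ) ∣ n ^ p - n := by
      simp [← ZMod.intCast_zmod_eq_zero_iff_dvd, ZMod.pow_card]
    exact_mod_cast Int.cast_dvd_cast (α := R) _ _ h
  have hsum := ((hn.trans (sub_dvd_pow_sub_pow x n p)).add (hp.trans hnp)).sub hn
  simpa using hsum

theorem pow_dvd_pow_sub_one [Fact p.Prime] (hp : π ^ (p - 1) ∣ p) {c : R} (hc : π ∣ c - 1) :
    π ^ p ∣ c ^ p - 1 := by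
  have hprime : p.Prime := Fact.out
  obtain ⟨r, hr⟩ := exists_add_pow_prime_eq hprime 1 (c - 1)
  have hpow : c ^ p - 1 = (c - 1) ^ p + p * ((c - 1) * r) := by
    rw [add_sub_cancel, one_pow] at hr
    rw [hr]
    ring
  rw [hpow]
  refine (pow_dvd_pow_of_dvd hc p).add ?_
  nth_rw 1 [← Nat.sub_add_cancel hprime.one_le, pow_succ]
  exact mul_dvd_mul hp (hc.mul_right r)

theorem exists_sq_dvd_mul_one_add_pow_sub_one (hp : p ≠ 0) (hπp : π ∣ p)
    (hint : ∀ x : R, ∃ n : ℤ, π ∣ x - n) {b : R} (hb : π ∣ b - 1) :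
    ∃ i : ℕ, π ^ 2 ∣ b * (1 + π) ^ i - 1 := by
  obtain ⟨e, he⟩ := hb
  obtain ⟨n, f, hn⟩ := hint e
  obtain ⟨i, hi⟩ := Int.eq_ofNat_of_zero_le (Int.emod_nonneg (-n) (Int.natCast_ne_zero.mpr hp))
  obtain ⟨r, hr⟩ : π ∣ (n + i : R) := by
    have h : (p : ℤ) ∣ n + i := ⟨-(-n / p), by rw [← hi, Int.emod_def]; ring⟩
    exact hπp.trans (by exact_mod_cast Int.cast_dvd_cast (α := R) _ _ h)
  obtain ⟨m, hm⟩ := Polynomial.powAddExpansion 1 π i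
  rw [one_pow, one_pow, mul_one] at hm
  refine ⟨i, f + r + e * i + m * (1 + π * e), ?_⟩
  linear_combination b * hm + (1 + i * π + m * π ^ 2) * he + π * hn + π * hr

variable [IsDomain R]

theorem pow_dvd_sub_one_of_pow_eq [Fact p.Prime] (hπ : Prime π) (hp : π ^ (p - 1) ∣ p)
    (hint : ∀ x : R, ∃ n : ℤ, π ∣ x - n) (hφ : ∀ x, π ∣ φ x - x) (hφπ : π ^ 2 ∣ φ π - s * π)
    (hst : ∀ k, 2 ≤ k → k < p → ¬ π ∣ s ^ k + t) {b c : R} (hc : c ^ p = φ b * b ^ t)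
    (hb : π ^ 2 ∣ b - 1) : π ^ p ∣ b - 1 := by
  have hprime : p.Prime := Fact.out
  have hπp : π ∣ p := (dvd_pow_self π (Nat.sub_ne_zero_of_lt hprime.one_lt)).trans hp
  have hπb : π ∣ b - 1 := (dvd_pow_self π two_ne_zero).trans hb
  have hπc : π ∣ c - 1 := by
    have hbt : π ∣ b ^ t - 1 := by simpa using hπb.trans (sub_dvd_pow_sub_pow b 1 t)
    have hsum := ((((hφ b).add hπb).mul_right (b ^ t)).add hbt).sub
      (dvd_pow_sub_self hπp hint c)
    convert hsum using 1
    rw [hc]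
    ring
  suffices h : ∀ k, 2 ≤ k → k ≤ p → π ^ k ∣ b - 1 from h p hprime.two_le le_rfl
  intro k hk
  induction k, hk using Nat.le_induction with
  | base => exact fun _ => hb
  | succ k hk ih =>
    intro hkp
    have hcp : π ^ (k + 1) ∣ φ b * b ^ t - 1 :=
      hc ▸ (pow_dvd_pow π hkp).trans (pow_dvd_pow_sub_one hp hπc)
    exact hπ.pow_dvd_of_dvd_mul_left _ (hst k hk hkp)
      (pow_succ_dvd_add_mul_sub_one hφ hφπ (by lia) (ih (by lia)) hcp)

theorem dvd_of_pow_eq_map_mul_pow (hπ : Prime π) (hp : p.Prime) (hφ : ∀ x, π ∣ φ x - x)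
    (hφπ : π ^ 2 ∣ φ π - s * π) (hs : ¬ π ∣ s) (ht : ¬ p ∣ t + 1) {v : ℕ} {a c : R}
    (ha : ¬ π ∣ a) (hc : c ^ p = φ (π ^ v * a) * (π ^ v * a) ^ t) : p ∣ v := by
  obtain ⟨w, hw⟩ := hφπ
  have hφπ' : φ π = (s + π * w) * π := by linear_combination hw
  have hsw : ¬ π ∣ s + π * w := fun h => hs ((dvd_add_left (dvd_mul_right π w)).mp h)
  have hφa : ¬ π ∣ φ a := fun h => ha (by simpa using h.sub (hφ a))
  have hunit : ¬ π ∣ (s + π * w) ^ v * φ a * a ^ t :=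
    hπ.not_dvd_mul (hπ.not_dvd_mul (mt hπ.dvd_of_dvd_pow hsw) hφa) (mt hπ.dvd_of_dvd_pow ha)
  have hval : emultiplicity π (c ^ p) = (v * (t + 1) : ℕ) := by
    have hfac : c ^ p = π ^ (v * (t + 1)) * ((s + π * w) ^ v * φ a * a ^ t) := by
      rw [hc, map_mul, map_pow, hφπ', mul_pow _ π v]
      ring
    rw [hfac, emultiplicity_mul hπ, emultiplicity_pow_self_of_prime hπ,
      emultiplicity_eq_zero.mpr hunit, add_zero]
  rw [emultiplicity_pow hπ] at hval
  have hfin : emultiplicity π c ≠ ⊤ := fun h => by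
    rw [h, ENat.mul_top (by simpa using hp.ne_zero)] at hval
    exact ENat.natCast_ne_top _ hval.symm
  obtain ⟨u, hu⟩ := ENat.ne_top_iff_exists.mp hfin
  rw [← hu] at hval
  exact (hp.dvd_mul.mp ⟨u, by exact_mod_cast hval.symm⟩).resolve_right ht

end Congruence

section Cyclotomic

theorem exists_gal_apply_eq_pow {M : Type*} [Field M] [CharZero M] [Normal ℚ M] {ζ : M} {n : ℕ}
    [NeZero n] (hζ : IsPrimitiveRoot ζ n) {k : ℕ} (hk : k.Coprime n) :
    ∃ σ : Gal(M/ℚ), σ ζ = ζ ^ k := by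
  have hn : 0 < n := NeZero.pos n
  have hconj : IsConjRoot ℚ (ζ ^ k) ζ := by
    rw [IsConjRoot, ← cyclotomic_eq_minpoly_rat (hζ.pow_of_coprime k hk) hn,
      ← cyclotomic_eq_minpoly_rat hζ hn]
  obtain ⟨σ, hσ⟩ := isConjRoot_iff_exists_algEquiv.mp hconj
  exact ⟨σ, hσ⟩

theorem exists_add_eq_forall_not_dvd_pow_add {p : ℕ} [Fact p.Prime] (hp2 : p ≠ 2) :
    ∃ s t : ℕ, s + t = p ∧ ¬ p ∣ s ∧ ¬ p ∣ t + 1 ∧ ∀ k, 2 ≤ k → k < p → ¬ p ∣ s ^ k + t := by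
  have hp : p.Prime := Fact.out
  have h2p : 2 < p := lt_of_le_of_ne hp.two_le hp2.symm
  obtain ⟨u, hu⟩ := IsCyclic.exists_generator (α := (ZMod p)ˣ)
  have hord : orderOf u = p - 1 := by
    rw [orderOf_eq_card_of_forall_mem_zpowers hu, Nat.card_eq_fintype_card, ZMod.card_units]
  obtain ⟨t, ht⟩ := Nat.exists_eq_add_of_le (ZMod.val_lt (u : ZMod p)).le
  have hcast : ((u : ZMod p) : ZMod p) + t = 0 := by
    have h := congrArg (Nat.cast : ℕ → ZMod p) ht
    simpa using h.symm
  have hs0 : (u : ZMod p).val ≠ 0 := (ZMod.val_eq_zero _).not.mpr u.ne_zero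
  have hpow (k : ℕ) (hk : 2 ≤ k) (hkp : k < p) : ¬ p ∣ (u : ZMod p).val ^ k + t := by
    intro h
    rw [← ZMod.natCast_eq_zero_iff, Nat.cast_add, Nat.cast_pow, ZMod.natCast_zmod_val,
      ← hcast, add_left_inj] at h
    have huk : u ^ k = u ^ 1 := Units.ext (by simpa using h)
    rw [pow_eq_pow_iff_modEq, hord] at huk
    have := Nat.le_of_dvd (by lia) ((Nat.modEq_iff_dvd' (by lia)).mp huk.symm)
    lia
  refine ⟨_, t, ht.symm, Nat.not_dvd_of_pos_of_lt (by lia) (ZMod.val_lt _), fun h => ?_, hpow⟩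
  have hle := Nat.le_of_dvd (by lia) h
  have hs1 : (u : ZMod p).val = 1 := by lia
  refine hpow 2 le_rfl h2p ?_
  rw [hs1, one_pow, add_comm]
  exact h

theorem exists_pow_eq_mul_pow {F M : Type*} [Field F] [Field M] [Algebra F M]
    [FiniteDimensional F M] [IsGalois F M] {p s t : ℕ} [NeZero p] {ζ : F}
    (hζ : IsPrimitiveRoot ζ p) {σ : M →+* M} {φ : F →+* F}
    (hσ : ∀ x, σ (algebraMap F M x) = algebraMap F M (φ x))
    (hcomm : ∀ (τ : Gal(M/F)) x, τ (σ x) = σ (τ x)) (hs : φ ζ = ζ ^ s) (hst : s + t = p) {α : M}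
    {a : F} (ha : α ^ p = algebraMap F M a) : ∃ c, c ^ p = φ a * a ^ t := by
  have hz := hζ.map_of_injective (algebraMap F M).injective
  have hfix (τ : Gal(M/F)) : τ (σ α * α ^ t) = σ α * α ^ t := by
    obtain ⟨j, -, hj⟩ := exists_eq_pow_mul_of_pow_eq_pow (x := τ α) (y := α) hz
      (by rw [← map_pow, ha, τ.commutes])
    have hroot : (algebraMap F M ζ) ^ (s * j) * (algebraMap F M ζ ^ j) ^ t = 1 := by
      rw [← pow_mul, ← pow_add, mul_comm j, ← add_mul, hst, pow_mul, hz.pow_eq_one, one_pow]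
    rw [map_mul, map_pow, hcomm, hj, map_mul, map_pow, hσ, hs, map_pow, mul_pow]
    linear_combination σ α * α ^ t * hroot
  obtain ⟨c, hc⟩ := (IsGalois.mem_range_algebraMap_iff_fixed (F := F) _).mpr hfix
  refine ⟨c, (algebraMap F M).injective ?_⟩
  rw [map_pow, hc, mul_pow, ← map_pow, ha, hσ, pow_right_comm, ha, map_mul, map_pow]

theorem sq_dvd_smul_sub_one_sub {R G : Type*} [CommRing R] [Group G] [MulSemiringAction G R]
    {z : R} {g : G} {s : ℕ} (hg : g • z = z ^ s) :
    (z - 1) ^ 2 ∣ g • (z - 1) - s * (z - 1) := by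
  obtain ⟨m, hm⟩ := Polynomial.powAddExpansion 1 (z - 1) s
  rw [add_sub_cancel, one_pow, one_pow, mul_one] at hm
  refine ⟨m, ?_⟩
  rw [smul_sub, smul_one, hg]
  linear_combination hm

variable {F : Type*} [Field F] [NumberField F] {p : ℕ} [NeZero p] [IsCyclotomicExtension {p} ℚ F]
  {ζ : F}

theorem exists_int_toInteger_sub_one_dvd_sub (hζ : IsPrimitiveRoot ζ p) (x : 𝓞 F) :
    ∃ n : ℤ, hζ.toInteger - 1 ∣ x - n := by
  have hx : x ∈ Algebra.adjoin ℤ {hζ.toInteger} :=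
    IsCyclotomicExtension.Rat.adjoin_singleton_eq_top hζ ▸ Algebra.mem_top
  rw [Algebra.adjoin_singleton_eq_range_aeval] at hx
  obtain ⟨f, rfl⟩ := hx
  refine ⟨f.eval 1, ?_⟩
  have h := sub_dvd_eval_sub hζ.toInteger 1 (f.map (algebraMap ℤ (𝓞 F)))
  rwa [eval_map, eval_map, eval₂_at_one] at h

theorem toInteger_sub_one_dvd_smul_sub (hζ : IsPrimitiveRoot ζ p) {g : Gal(F/ℚ)} {s : ℕ}
    (hg : g • hζ.toInteger = hζ.toInteger ^ s) (x : 𝓞 F) : hζ.toInteger - 1 ∣ g • x - x := by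
  obtain ⟨n, y, hy⟩ := exists_int_toInteger_sub_one_dvd_sub hζ x
  have hdvd : hζ.toInteger - 1 ∣ g • (x - n) := by
    rw [hy, smul_mul', smul_sub, smul_one, hg]
    exact (sub_one_dvd_pow_sub_one _ s).mul_right _
  have hn : g • (n : 𝓞 F) = n := map_intCast (MulSemiringAction.toRingHom _ (𝓞 F) g) n
  rw [smul_sub, hn] at hdvd
  simpa using hdvd.sub (Dvd.intro y hy.symm)

end Cyclotomic

section OddPrime

theorem smul_algebraMap_ringOfIntegers {F M : Type*} [Field F] [Field M] [Algebra F M]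
    (g : Gal(M/F)) (a : 𝓞 F) :
    g • algebraMap (𝓞 F) (𝓞 M) a = algebraMap (𝓞 F) (𝓞 M) a :=
  RingOfIntegers.ext (g.commutes a)

variable {F M : Type*} [Field F] [NumberField F] [Field M] [NumberField M] [Algebra F M]
  [IsAbelianGalois ℚ M] {p : ℕ} [Fact p.Prime] [IsCyclotomicExtension {p} ℚ F] {ζ : F}

theorem exists_pow_eq_smul_mul_pow (hζ : IsPrimitiveRoot ζ p) {s t : ℕ} (hst : s + t = p)
    (hs : ¬ p ∣ s) : ∃ φ : Gal(F/ℚ), φ • hζ.toInteger = hζ.toInteger ^ s ∧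
      ∀ (α : 𝓞 M) (a : 𝓞 F), α ^ p = algebraMap (𝓞 F) (𝓞 M) a →
        ∃ c : 𝓞 F, c ^ p = φ • a * a ^ t := by
  have hp : p.Prime := Fact.out
  have : IsGalois ℚ F := IsCyclotomicExtension.isGalois {p} ℚ F
  have : IsGalois F M := IsGalois.tower_top_of_isGalois ℚ F M
  obtain ⟨φ, hφ⟩ := exists_gal_apply_eq_pow hζ ((hp.coprime_iff_not_dvd.mpr hs).symm)
  refine ⟨φ, RingOfIntegers.ext hφ, fun α a ha => ?_⟩
  obtain ⟨c, hc⟩ := exists_pow_eq_mul_pow (α := (α : M)) (a := (a : F)) hζ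
    (σ := (φ.liftNormal M : M →+* M)) (φ := φ) (φ.liftNormal_commutes M)
    (fun τ x => DFunLike.congr_fun (mul_comm' (τ.restrictScalars ℚ) (φ.liftNormal M)) x) hφ hst
    (congrArg (algebraMap (𝓞 M) M) ha)
  have hint : IsIntegral ℤ c := by
    refine IsIntegral.of_pow hp.pos ?_
    rw [hc]
    exact (φ • a * a ^ t).2
  exact ⟨⟨c, hint⟩, RingOfIntegers.ext hc⟩

theorem toInteger_sub_one_pow_dvd_sub_one (hζ : IsPrimitiveRoot ζ p) (hp2 : p ≠ 2) {α : 𝓞 M}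
    {a : 𝓞 F} (hα : α ^ p = algebraMap (𝓞 F) (𝓞 M) a) (ha : (hζ.toInteger - 1) ^ 2 ∣ a - 1) :
    (hζ.toInteger - 1) ^ p ∣ a - 1 := by
  obtain ⟨s, t, hst, hs, -, hpow⟩ := exists_add_eq_forall_not_dvd_pow_add hp2
  obtain ⟨φ, hφ, hc⟩ := exists_pow_eq_smul_mul_pow (M := M) hζ hst hs
  obtain ⟨c, hc⟩ := hc α a hα
  refine pow_dvd_sub_one_of_pow_eq (φ := MulSemiringAction.toRingHom _ (𝓞 F) φ)
    hζ.zeta_sub_one_prime' (IsCyclotomicExtension.Rat.associated_zeta_sub_one_pow_prime p hζ).dvd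
    (exists_int_toInteger_sub_one_dvd_sub hζ) (toInteger_sub_one_dvd_smul_sub hζ hφ)
    (sq_dvd_smul_sub_one_sub hφ) (fun k hk hkp h => hpow k hk hkp ?_) hc ha
  rw [← Int.natCast_dvd_natCast, ← IsCyclotomicExtension.Rat.zeta_sub_one_dvd_intCast_iff' p hζ]
  simpa using h

theorem prime_dvd_of_pow_eq_toInteger_sub_one_pow_mul (hζ : IsPrimitiveRoot ζ p) (hp2 : p ≠ 2)
    {α : 𝓞 M} {a : 𝓞 F} {v : ℕ} (ha : ¬ hζ.toInteger - 1 ∣ a)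
    (hα : α ^ p = algebraMap (𝓞 F) (𝓞 M) ((hζ.toInteger - 1) ^ v * a)) : p ∣ v := by
  obtain ⟨s, t, hst, hs, ht, -⟩ := exists_add_eq_forall_not_dvd_pow_add hp2
  obtain ⟨φ, hφ, hc⟩ := exists_pow_eq_smul_mul_pow (M := M) hζ hst hs
  obtain ⟨c, hc⟩ := hc α _ hα
  refine dvd_of_pow_eq_map_mul_pow (φ := MulSemiringAction.toRingHom _ (𝓞 F) φ) (s := s)
    hζ.zeta_sub_one_prime' Fact.out (toInteger_sub_one_dvd_smul_sub hζ hφ)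
    (sq_dvd_smul_sub_one_sub hφ) (fun h => hs ?_) ht ha hc
  rw [← Int.natCast_dvd_natCast, ← IsCyclotomicExtension.Rat.zeta_sub_one_dvd_intCast_iff' p hζ]
  simpa using h

variable {P : Ideal (𝓞 M)} [P.IsPrime] {g : Gal(M/F)}

theorem smul_eq_self_of_sq_dvd_sub_one (hζ : IsPrimitiveRoot ζ p) (hp2 : p ≠ 2)
    (hpP : (p : 𝓞 M) ∈ P) (hg : g ∈ P.inertia Gal(M/F)) {α : 𝓞 M}
    {a : 𝓞 F} (hα : α ^ p = algebraMap (𝓞 F) (𝓞 M) a) (ha : (hζ.toInteger - 1) ^ 2 ∣ a - 1) :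
    g • α = α := by
  have hz : IsPrimitiveRoot (algebraMap (𝓞 F) (𝓞 M) hζ.toInteger) p :=
    hζ.toInteger_isPrimitiveRoot.map_of_injective (FaithfulSMul.algebraMap_injective _ _)
  have hzP : algebraMap (𝓞 F) (𝓞 M) hζ.toInteger - 1 ∈ P := by
    obtain ⟨u, hu⟩ := IsCyclotomicExtension.Rat.associated_zeta_sub_one_pow_prime p hζ
    have h := congrArg (algebraMap (𝓞 F) (𝓞 M)) hu
    rw [map_mul, map_pow, map_sub, map_one, map_natCast] at h
    exact ‹P.IsPrime›.mem_of_pow_mem _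
      ((Ideal.mul_unit_mem_iff_mem P (u.isUnit.map _)).mp (h ▸ hpP))
  refine smul_eq_self_of_smul_pow_eq hg hz hzP (smul_algebraMap_ringOfIntegers g _) ?_ ?_
  · rw [hα, smul_algebraMap_ringOfIntegers]
  · rw [hα]
    simpa using (algebraMap (𝓞 F) (𝓞 M)).map_dvd (toInteger_sub_one_pow_dvd_sub_one hζ hp2 hα ha)

theorem smul_eq_self_of_not_dvd (hζ : IsPrimitiveRoot ζ p) (hp2 : p ≠ 2)
    (hpP : (p : 𝓞 M) ∈ P) (hg : g ∈ P.inertia Gal(M/F)) {w : 𝓞 M}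
    (hw : w ^ p = algebraMap (𝓞 F) (𝓞 M) hζ.toInteger) (hgw : g • w = w) {α : 𝓞 M}
    {a : 𝓞 F} (hα : α ^ p = algebraMap (𝓞 F) (𝓞 M) a) (ha : ¬ hζ.toInteger - 1 ∣ a) :
    g • α = α := by
  have hp : p.Prime := Fact.out
  rcases eq_or_ne α 0 with rfl | hα0
  · exact smul_zero g
  have hπp : hζ.toInteger - 1 ∣ p := by
    simpa using IsCyclotomicExtension.Rat.zeta_sub_one_dvd_intCast_iff' p hζ |>.mpr dvd_rfl
  have hint := exists_int_toInteger_sub_one_dvd_sub hζ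
  have hfermat : hζ.toInteger - 1 ∣ a ^ (p - 1) - 1 := by
    refine (hζ.zeta_sub_one_prime'.dvd_or_dvd ?_).resolve_left ha
    rw [mul_sub_one, mul_pow_sub_one hp.ne_zero]
    exact dvd_pow_sub_self hπp hint a
  obtain ⟨i, hi⟩ := exists_sq_dvd_mul_one_add_pow_sub_one hp.ne_zero hπp hint hfermat
  rw [add_sub_cancel] at hi
  have hpow : (α ^ (p - 1) * w ^ i) ^ p =
      algebraMap (𝓞 F) (𝓞 M) (a ^ (p - 1) * hζ.toInteger ^ i) := by
    rw [mul_pow, pow_right_comm, hα, pow_right_comm, hw, map_mul, map_pow, map_pow]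
  have hfix := smul_eq_self_of_sq_dvd_sub_one hζ hp2 hpP hg hpow hi
  have hw0 : w ≠ 0 := by
    rintro rfl
    rw [zero_pow hp.ne_zero, eq_comm, map_eq_zero_iff _ (FaithfulSMul.algebraMap_injective _ _)]
      at hw
    exact hζ.toInteger_isPrimitiveRoot.ne_zero hp.ne_zero hw
  rw [smul_mul', smul_pow', smul_pow', hgw] at hfix
  have hfix' := mul_right_cancel₀ (pow_ne_zero i hw0) hfix
  have hgα : (g • α) ^ p = α ^ p := by rw [← smul_pow', hα, smul_algebraMap_ringOfIntegers]
  rw [← pow_sub_one_mul hp.ne_zero, ← pow_sub_one_mul hp.ne_zero α, hfix'] at hgα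
  exact mul_left_cancel₀ (pow_ne_zero _ hα0) hgα

theorem smul_eq_self_of_pow_eq (hζ : IsPrimitiveRoot ζ p) (hp2 : p ≠ 2)
    (hpP : (p : 𝓞 M) ∈ P) (hg : g ∈ P.inertia Gal(M/F)) {w : 𝓞 M}
    (hw : w ^ p = algebraMap (𝓞 F) (𝓞 M) hζ.toInteger) (hgw : g • w = w) {α : 𝓞 M}
    {a : 𝓞 F} (hα : α ^ p = algebraMap (𝓞 F) (𝓞 M) a) : g • α = α := by
  have hp : p.Prime := Fact.out
  have hπ := hζ.zeta_sub_one_prime'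
  rcases eq_or_ne α 0 with rfl | hα0
  · exact smul_zero g
  have ha0 : a ≠ 0 := by
    rintro rfl
    rw [map_zero] at hα
    exact hα0 (pow_eq_zero_iff hp.ne_zero |>.mp hα)
  obtain ⟨v, a', ha', rfl⟩ := WfDvdMonoid.max_power_factor ha0 hπ.irreducible
  obtain ⟨k, rfl⟩ := prime_dvd_of_pow_eq_toInteger_sub_one_pow_mul hζ hp2 ha' hα
  set x := algebraMap (𝓞 F) (𝓞 M) ((hζ.toInteger - 1) ^ k) with hx
  have hx0 : x ≠ 0 :=
    (map_ne_zero_iff _ (FaithfulSMul.algebraMap_injective _ _)).mpr (pow_ne_zero k hπ.ne_zero)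
  rw [mul_comm p, pow_mul, map_mul, map_pow, ← hx] at hα
  obtain ⟨β, rfl⟩ := (IsIntegrallyClosed.pow_dvd_pow_iff hp.ne_zero).mp (Dvd.intro _ hα.symm)
  rw [mul_pow] at hα
  have hβ := mul_left_cancel₀ (pow_ne_zero p hx0) hα
  rw [smul_mul', hx, smul_algebraMap_ringOfIntegers,
    smul_eq_self_of_not_dvd hζ hp2 hpP hg hw hgw hβ ha']

theorem apply_eq_self_of_mem_inertia_of_pow_eq (hζ : IsPrimitiveRoot ζ p) (hp2 : p ≠ 2)
    (hpP : (p : 𝓞 M) ∈ P) (hg : g ∈ P.inertia Gal(M/F)) {w : M}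
    (hw : w ^ p = algebraMap F M ζ) (hgw : g w = w) {α : M} {a : F}
    (hα : α ^ p = algebraMap F M a) : g α = α := by
  have hwint : IsIntegral ℤ w := by
    refine IsIntegral.of_pow (NeZero.pos p) ?_
    rw [hw]
    exact (algebraMap (𝓞 F) (𝓞 M) hζ.toInteger).2
  have halg : IsAlgebraic ℤ α := (IsFractionRing.isAlgebraic_iff ℤ ℚ M).mpr (.of_finite ℚ α)
  obtain ⟨m, hm0, hm⟩ := halg.exists_integral_multiple
  have hpow : (m • α) ^ p = algebraMap F M (m ^ p • a) := by
    rw [_root_.smul_pow, hα, map_zsmul]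
  have ha : IsIntegral ℤ (m ^ p • a) := by
    rw [← isIntegral_algebraMap_iff (algebraMap F M).injective, ← hpow]
    exact hm.pow p
  have hfix := smul_eq_self_of_pow_eq hζ hp2 hpP hg (w := ⟨w, hwint⟩) (RingOfIntegers.ext hw)
    (RingOfIntegers.ext hgw) (α := ⟨m • α, hm⟩) (a := ⟨m ^ p • a, ha⟩) (RingOfIntegers.ext hpow)
  have hfix' : g (m • α) = m • α := congrArg (algebraMap (𝓞 M) M) hfix
  rw [map_zsmul] at hfix'
  exact smul_right_injective M hm0 hfix'

end OddPrime

section EvenPrime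

variable {M : Type*} [Field M] [NumberField M] {P : Ideal (𝓞 M)} [P.IsPrime] {g : Gal(M/ℚ)}

theorem apply_eq_self_of_sq_eq_four_mul_add_one (h2P : 2 ∈ P) (hg : g ∈ P.inertia Gal(M/ℚ))
    {α : M} {k : ℤ} (hα : α ^ 2 = 4 * k + 1) : g α = α := by
  have hint : IsIntegral ℤ α := by
    refine IsIntegral.of_pow two_pos ?_
    rw [hα]
    exact_mod_cast isIntegral_intCast (4 * k + 1)
  obtain ⟨β, rfl⟩ : ∃ β : 𝓞 M, (β : M) = α := ⟨⟨α, hint⟩, rfl⟩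
  have hsq : β ^ 2 = (4 * k + 1 : ℤ) :=
    RingOfIntegers.ext (hα.trans ((by push_cast; rfl : (4 * k + 1 : M) = (4 * k + 1 : ℤ)).trans
      (map_intCast (algebraMap (𝓞 M) M) _).symm))
  have hneg : (-1 - 1 : 𝓞 M) = -2 := by norm_num
  have hfix : g • β = β := by
    refine smul_eq_self_of_smul_pow_eq hg (p := 2) (IsPrimitiveRoot.neg_one 0 two_ne_zero.symm)
      (hneg ▸ P.neg_mem h2P) ?_ ?_ ?_
    · rw [smul_neg, smul_one]
    · rw [hsq]
      exact map_intCast (MulSemiringAction.toRingHom _ (𝓞 M) g) _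
    · rw [hsq, hneg]
      exact ⟨k, by push_cast; ring⟩
  exact congrArg (algebraMap (𝓞 M) M) hfix

theorem apply_eq_self_of_mem_inertia_of_sq_eq (h2P : 2 ∈ P) (hg : g ∈ P.inertia Gal(M/ℚ))
    {i r : M} (hi : i ^ 2 = -1) (hgi : g i = i) (hr : r ^ 2 = 2) (hgr : g r = r) {α : M} {a : ℚ}
    (hα : α ^ 2 = a) : g α = α := by
  have hi0 : i ≠ 0 := by rintro rfl; norm_num at hi
  have hr0 : r ≠ 0 := by rintro rfl; norm_num at hr
  have hodd {β : M} {m : ℤ} (hm : ¬ 2 ∣ m) (hβ : β ^ 2 = m) : g β = β := by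
    obtain ⟨k, rfl | rfl⟩ : ∃ k, m = 4 * k + 1 ∨ m = 4 * k - 1 := ⟨(m + 1) / 4, by lia⟩
    · exact apply_eq_self_of_sq_eq_four_mul_add_one h2P hg (k := k) (by simpa using hβ)
    · have h := apply_eq_self_of_sq_eq_four_mul_add_one h2P hg (α := i * β) (k := -k)
        (by rw [mul_pow, hi, hβ]; push_cast; ring)
      rw [map_mul, hgi] at h
      exact mul_left_cancel₀ hi0 h
  rcases eq_or_ne a 0 with rfl | ha0
  · rw [Rat.cast_zero, sq_eq_zero_iff] at hα
    rw [hα, map_zero]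
  have hd0 : (a.den : M) ≠ 0 := by exact_mod_cast a.den_ne_zero
  obtain ⟨v, m, hm, hvm⟩ := WfDvdMonoid.max_power_factor (a₀ := a.num * a.den)
    (x := 2) (by simpa using ha0) Int.prime_two.irreducible
  have h := hodd (β := a.den * α / r ^ v) hm (by
    rw [div_pow, mul_pow, hα, ← pow_mul, mul_comm v, pow_mul, hr]
    have hcast := congrArg (Int.cast : ℤ → M) hvm
    push_cast at hcast
    rw [div_eq_iff (pow_ne_zero v two_ne_zero), mul_comm (m : M), ← hcast, Rat.cast_def]
    field_simp)
  rw [map_div₀, map_mul, map_natCast, map_pow, hgr] at h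
  exact mul_left_cancel₀ hd0 ((div_left_inj' (pow_ne_zero v hr0)).mp h)

end EvenPrime

section Kummer

theorem exists_normal_index_eq_of_isPGroup {G : Type*} [Group G] [Finite G] [Nontrivial G] {p : ℕ}
    [Fact p.Prime] (hG : IsPGroup p G) : ∃ T : Subgroup G, T.Normal ∧ T.index = p := by
  have hp : p.Prime := Fact.out
  obtain ⟨k, hk, hcard⟩ := hG.nontrivial_iff_card.mp ‹_›
  obtain ⟨j, rfl⟩ := Nat.exists_eq_succ_of_ne_zero hk.ne'
  obtain ⟨T, hT⟩ := Sylow.exists_subgroup_card_pow_prime p (hcard ▸ pow_dvd_pow p j.le_succ)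
  have hindex : T.index = p := by
    have h := T.card_mul_index
    rw [hT, hcard, pow_succ] at h
    exact Nat.eq_of_mul_eq_mul_left (pow_pos hp.pos j) h
  refine ⟨T, T.normal_of_index_eq_minFac_card ?_, hindex⟩
  rw [hindex, hcard, hp.pow_minFac hk.ne']

variable {F N : Type*} [Field F] [Field N] [Algebra F N] [FiniteDimensional F N] {p : ℕ}
  [Fact p.Prime] {z : F}

theorem exists_pow_eq_algebraMap_of_isPGroup [IsGalois F N] [Nontrivial Gal(N/F)]
    (hz : IsPrimitiveRoot z p) (hN : IsPGroup p Gal(N/F)) :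
    ∃ (α : N) (a : F), α ^ p = algebraMap F N a ∧ α ∉ (⊥ : IntermediateField F N) := by
  have hp : p.Prime := Fact.out
  obtain ⟨T, hT, hindex⟩ := exists_normal_index_eq_of_isPGroup hN
  let E := IntermediateField.fixedField T
  have hE : Module.finrank F E = p := by
    rw [IntermediateField.finrank_eq_fixingSubgroup_index,
      IntermediateField.fixingSubgroup_fixedField, hindex]
  have : IsCyclic Gal(E/F) := isCyclic_of_prime_card ((IsGalois.card_aut_eq_finrank F E).trans hE)
  obtain ⟨α, ⟨a, ha⟩, htop⟩ := exists_root_adjoin_eq_top_of_isCyclic F E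
    (hE ▸ ⟨z, (mem_primitiveRoots hp.pos).mpr hz⟩)
  rw [hE] at ha
  refine ⟨α, a, congrArg Subtype.val ha.symm, fun hα => ?_⟩
  obtain ⟨b, hb⟩ := IntermediateField.mem_bot.mp hα
  have hbot : α ∈ (⊥ : IntermediateField F E) := IntermediateField.mem_bot.mpr ⟨b, Subtype.ext hb⟩
  rw [← IntermediateField.adjoin_simple_eq_bot_iff, htop, ← IntermediateField.finrank_eq_one_iff,
    IntermediateField.finrank_top', hE] at hbot
  exact hp.one_lt.ne' hbot

theorem eq_top_of_forall_pow_eq [IsAbelianGalois F N] (hz : IsPrimitiveRoot z p)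
    {A : Subgroup Gal(N/F)} (hA : ∀ g, ∃ k, g ^ p ^ k ∈ A)
    (h : ∀ (α : N) (a : F), α ^ p = algebraMap F N a → (∀ g ∈ A, g α = α) →
      ∀ g : Gal(N/F), g α = α) : A = ⊤ := by
  let E := IntermediateField.fixedField A
  let e : Gal(N/F) ⧸ A ≃* Gal(E/F) := IsGalois.normalAutEquivQuotient A
  have hE : IsPGroup p Gal(E/F) := by
    refine IsPGroup.of_equiv (fun x => ?_) e
    obtain ⟨g, rfl⟩ := QuotientGroup.mk_surjective x
    exact (hA g).imp fun k hk => (QuotientGroup.eq_one_iff _).mpr hk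
  by_contra hne
  have : Nontrivial (Gal(N/F) ⧸ A) := QuotientGroup.nontrivial_iff.mpr hne
  have : Nontrivial Gal(E/F) := e.injective.nontrivial
  obtain ⟨α, a, ha, hα⟩ := exists_pow_eq_algebraMap_of_isPGroup hz hE
  have hfix := h α a (congrArg (algebraMap E N) ha) fun g hg => α.2 ⟨g, hg⟩
  obtain ⟨b, hb⟩ := IntermediateField.mem_bot.mp ((IsGalois.mem_bot_iff_fixed (α : N)).mpr hfix)
  exact hα (IntermediateField.mem_bot.mpr ⟨b, Subtype.ext hb⟩)

end Kummer

section InertiaGroups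

theorem natCast_notMem_of_coprime {R : Type*} [CommRing R] {P : Ideal R} (hP : P ≠ ⊤) {q r : ℕ}
    (hq : (q : R) ∈ P) (hr : r.Coprime q) : (r : R) ∉ P := fun hrP => by
  obtain ⟨a, b, hab⟩ := hr.cast (R := R)
  exact (Ideal.ne_top_iff_one P).mp hP
    (hab ▸ P.add_mem (P.mul_mem_left a hrP) (P.mul_mem_left b hq))

theorem card_inertia_eq_ramificationIdx {R S G : Type*} [CommRing R] [IsDomain R] [CommRing S]
    [IsDomain S] [Algebra R S] [Module.Finite R S] [Module.Flat R S] [Group G] [Finite G]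
    [MulSemiringAction G S] [IsGaloisGroup G R S] (P : Ideal S) [P.IsPrime]
    [PerfectField (P.under R).ResidueField] : Nat.card (P.inertia G) = P.ramificationIdx R := by
  rw [Ideal.card_inertia_eq_ramificationIdxIn (P.under R),
    Ideal.ramificationIdxIn_eq_ramificationIdx (P.under R) P G]

theorem liesOver_span_natCast {M : Type*} [Field M] {P : Ideal (𝓞 M)} [P.IsPrime] {q : ℕ}
    (hq : q.Prime) (hqP : (q : 𝓞 M) ∈ P) : P.LiesOver (Ideal.span {(q : ℤ)}) :=
  (Ideal.liesOver_span_iff Ideal.IsPrime.ne_top' (Nat.prime_iff_prime_int.mp hq)).mpr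
    (by simpa using hqP)

variable {M : Type*} [Field M] [NumberField M]

theorem exists_isMaximal_natCast_mem (M : Type*) [Field M] [NumberField M] {q : ℕ}
    (hq : q.Prime) : ∃ P : Ideal (𝓞 M), P.IsMaximal ∧ (q : 𝓞 M) ∈ P := by
  have := (Nat.prime_iff_prime_int.mp hq).isMaximal_span_singleton
  obtain ⟨P, hP, hover⟩ := Ideal.exists_maximal_ideal_liesOver_of_isIntegral (S := 𝓞 M)
    (Ideal.span {(q : ℤ)})
  refine ⟨P, hP, ?_⟩
  have h := (Ideal.liesOver_span_iff hP.ne_top (Nat.prime_iff_prime_int.mp hq)).mp hover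
  simpa using h

theorem exists_prime_natCast_mem (P : Ideal (𝓞 M)) [P.IsMaximal] :
    ∃ q : ℕ, q.Prime ∧ (q : 𝓞 M) ∈ P := by
  have : Finite (𝓞 M ⧸ P) := Ideal.finiteQuotientOfFreeOfNeBot P
    (Ring.ne_bot_of_isMaximal_of_not_isField ‹_› (RingOfIntegers.not_isField M))
  obtain ⟨q, _⟩ := CharP.exists (𝓞 M ⧸ P)
  refine ⟨q, CharP.char_is_prime (𝓞 M ⧸ P) q, ?_⟩
  rw [← Ideal.Quotient.eq_zero_iff_mem, map_natCast, CharP.cast_eq_zero]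

theorem exists_smul_sub_pow_mem [IsGalois ℚ M] {P : Ideal (𝓞 M)} [P.IsMaximal] {q : ℕ}
    (hq : q.Prime) (hqP : (q : 𝓞 M) ∈ P) : ∃ d : Gal(M/ℚ), ∀ x : 𝓞 M, d • x - x ^ q ∈ P := by
  have : Finite (𝓞 M ⧸ P) := Ideal.finiteQuotientOfFreeOfNeBot P
    (Ring.ne_bot_of_isMaximal_of_not_isField ‹_› (RingOfIntegers.not_isField M))
  obtain ⟨d, hd⟩ := IsArithFrobAt.exists_of_isInvariant ℤ Gal(M/ℚ) P
  have hover := liesOver_span_natCast hq hqP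
  have hcard : Nat.card (ℤ ⧸ P.under ℤ) = q := by
    rw [← hover.over, Int.card_ideal_quot]
  exact ⟨d, fun x => hcard ▸ hd x⟩

theorem inertia_le_inertia [IsAbelianGalois ℚ M] {P Q : Ideal (𝓞 M)} [P.IsPrime] [Q.IsPrime]
    {q : ℕ} (hq : q.Prime) (hP : (q : 𝓞 M) ∈ P) (hQ : (q : 𝓞 M) ∈ Q) :
    P.inertia Gal(M/ℚ) ≤ Q.inertia Gal(M/ℚ) := by
  have := liesOver_span_natCast hq hP
  have := liesOver_span_natCast hq hQ
  obtain ⟨σ, rfl⟩ := Ideal.exists_smul_eq_of_isGaloisGroup (Ideal.span {(q : ℤ)}) P Q Gal(M/ℚ)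
  intro g hg x
  have h := Ideal.smul_mem_pointwise_smul σ _ _ (hg (σ⁻¹ • x))
  rwa [smul_sub, smul_smul, smul_smul, smul_smul, mul_comm' σ g, mul_assoc, mul_inv_cancel,
    mul_one, one_smul] at h

theorem eq_top_of_forall_inertia_le [IsGalois ℚ M] {H : Subgroup Gal(M/ℚ)}
    (h : ∀ P : Ideal (𝓞 M), P.IsMaximal → P.inertia Gal(M/ℚ) ≤ H) : H = ⊤ := by
  let E := IntermediateField.fixedField H
  suffices hE : Module.finrank ℚ E = 1 by
    have hbot : IntermediateField.fixedField H = ⊥ := IntermediateField.finrank_eq_one_iff.mp hE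
    rw [← IntermediateField.fixingSubgroup_fixedField H, hbot, IntermediateField.fixingSubgroup_bot]
  by_contra hne
  obtain ⟨Q, _, hQ⟩ := NumberField.exists_not_isUnramifiedAt_int (𝒪 := 𝓞 E) hne
  refine hQ (Ideal.ramificationIdx_eq_one_iff.mp ?_)
  have : IsGaloisGroup H E M := IsGaloisGroup.subgroup Gal(M/ℚ) ℚ M H
  have : IsGaloisGroup H (𝓞 E) (𝓞 M) := IsGaloisGroup.of_isFractionRing H (𝓞 E) (𝓞 M) E M
  obtain ⟨P, hP, hover⟩ := Ideal.exists_maximal_ideal_liesOver_of_isIntegral (S := 𝓞 M) Q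
  have : (P.under (𝓞 E)).IsMaximal := Ideal.IsMaximal.under (𝓞 E) P
  have : (P.under ℤ).IsMaximal := Ideal.IsMaximal.under ℤ P
  have hcard : Nat.card (P.inertia Gal(M/ℚ)) = Nat.card (P.inertia H) := by
    unfold Ideal.inertia
    rw [← AddSubgroup.subgroupOf_inertia P.toAddSubgroup H]
    exact (Nat.card_congr (Subgroup.subgroupOfEquivOfLe (h P hP)).toEquiv).symm
  rw [card_inertia_eq_ramificationIdx (R := ℤ), card_inertia_eq_ramificationIdx (R := 𝓞 E),
    Ideal.ramificationIdx_tower Q P] at hcard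
  exact Nat.eq_of_mul_eq_mul_right (Ideal.ramificationIdx_pos P (𝓞 E))
    (hcard.trans (one_mul _).symm)

theorem inertia_eq_bot_of_not_dvd_discr [IsGalois ℚ M] {q : ℕ} (hq : q.Prime)
    (hdisc : ¬ (q : ℤ) ∣ discr M) {P : Ideal (𝓞 M)} [P.IsMaximal] (hqP : (q : 𝓞 M) ∈ P) :
    P.inertia Gal(M/ℚ) = ⊥ := by
  have : (P.under ℤ).IsMaximal := Ideal.IsMaximal.under ℤ P
  have hunram := (NumberField.not_dvd_discr_iff_forall_mem M (𝓞 M)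
    (Nat.prime_iff_prime_int.mp hq)).mp hdisc P inferInstance (by simpa using hqP)
  rw [← Subgroup.card_eq_one, card_inertia_eq_ramificationIdx (R := ℤ)]
  exact Ideal.ramificationIdx_eq_one_iff.mpr hunram

theorem restrictNormalHom_mem_inertia {K : Type*} [Field K] [NumberField K] [Algebra K M]
    [Normal ℚ K] {P : Ideal (𝓞 M)} {g : Gal(M/ℚ)} (hg : g ∈ P.inertia Gal(M/ℚ)) :
    AlgEquiv.restrictNormalHom K g ∈ (P.under (𝓞 K)).inertia Gal(K/ℚ) := fun x => by
  have h : algebraMap (𝓞 K) (𝓞 M) (AlgEquiv.restrictNormalHom K g • x)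
      = g • algebraMap (𝓞 K) (𝓞 M) x := RingOfIntegers.ext (g.restrictNormal_commutes K x)
  change algebraMap (𝓞 K) (𝓞 M) (AlgEquiv.restrictNormalHom K g • x - x) ∈ P
  rw [map_sub, h]
  exact hg _

/-- The inertia subgroup of `Gal(M/ℚ)` at the rational prime `q`: the subgroup generated by the
inertia groups of all primes of `M` above `q`. For abelian `M` these inertia groups coincide. -/
def inertiaAt (M : Type*) [Field M] [NumberField M] (q : ℕ) : Subgroup Gal(M/ℚ) :=
  ⨆ (P : Ideal (𝓞 M)) (_ : P.IsMaximal) (_ : (q : 𝓞 M) ∈ P), P.inertia Gal(M/ℚ)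

theorem inertia_le_inertiaAt {P : Ideal (𝓞 M)} [P.IsMaximal] {q : ℕ} (hqP : (q : 𝓞 M) ∈ P) :
    P.inertia Gal(M/ℚ) ≤ inertiaAt M q :=
  le_iSup_of_le P (le_iSup₂_of_le ‹_› hqP le_rfl)

theorem inertiaAt_le_iff {q : ℕ} {H : Subgroup Gal(M/ℚ)} : inertiaAt M q ≤ H ↔
    ∀ P : Ideal (𝓞 M), P.IsMaximal → (q : 𝓞 M) ∈ P → P.inertia Gal(M/ℚ) ≤ H := by
  simp only [inertiaAt, iSup_le_iff]

theorem exists_inertiaAt_eq_inertia (M : Type*) [Field M] [NumberField M] [IsAbelianGalois ℚ M]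
    {q : ℕ} (hq : q.Prime) : ∃ P : Ideal (𝓞 M), P.IsMaximal ∧ (q : 𝓞 M) ∈ P ∧
      inertiaAt M q = P.inertia Gal(M/ℚ) := by
  obtain ⟨P, hP, hqP⟩ := exists_isMaximal_natCast_mem M hq
  refine ⟨P, hP, hqP, le_antisymm ?_ (inertia_le_inertiaAt hqP)⟩
  exact inertiaAt_le_iff.mpr fun Q _ hqQ => inertia_le_inertia hq hqQ hqP

theorem eq_top_of_forall_inertiaAt_le [IsGalois ℚ M] {H : Subgroup Gal(M/ℚ)}
    (h : ∀ q : ℕ, q.Prime → inertiaAt M q ≤ H) : H = ⊤ :=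
  eq_top_of_forall_inertia_le fun P _ => by
    obtain ⟨q, hq, hqP⟩ := exists_prime_natCast_mem P
    exact (inertia_le_inertiaAt hqP).trans (h q hq)

theorem apply_eq_self_of_mem_inertiaAt {q r : ℕ} (hr : r.Coprime q) {z : M} (hz : z ^ r = 1)
    {g : Gal(M/ℚ)} (hg : g ∈ inertiaAt M q) : g z = z := by
  suffices h : inertiaAt M q ≤ MulAction.stabilizer Gal(M/ℚ) z from h hg
  refine inertiaAt_le_iff.mpr fun P hP hqP g hg => ?_
  have hrP : (r : 𝓞 M) ∉ P := natCast_notMem_of_coprime hP.ne_top hqP hr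
  have hr0 : r ≠ 0 := by
    rintro rfl
    simp at hrP
  let z' : 𝓞 M := ⟨z, IsIntegral.of_pow hr0.bot_lt (hz ▸ isIntegral_one)⟩
  exact congrArg (algebraMap (𝓞 M) M) <|
    smul_eq_self_of_pow_eq_one_of_mem_inertia (z := z') hg (RingOfIntegers.ext hz) hrP

theorem restrictNormalHom_eq_one_of_mem_inertiaAt {K : Type*} [Field K] [NumberField K]
    [IsGalois ℚ K] [Algebra K M] {q : ℕ} (hq : q.Prime) (hdisc : ¬ (q : ℤ) ∣ discr K)
    {g : Gal(M/ℚ)} (hg : g ∈ inertiaAt M q) : AlgEquiv.restrictNormalHom K g = 1 := by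
  suffices h : inertiaAt M q ≤ (AlgEquiv.restrictNormalHom K).ker from h hg
  refine inertiaAt_le_iff.mpr fun P _ hqP g hg => ?_
  have : (P.under (𝓞 K)).IsMaximal := Ideal.IsMaximal.under (𝓞 K) P
  rw [MonoidHom.mem_ker, ← Subgroup.mem_bot,
    ← inertia_eq_bot_of_not_dvd_discr hq hdisc (P := P.under (𝓞 K)) (by simpa using hqP)]
  exact restrictNormalHom_mem_inertia hg

theorem card_inertiaAt_le [IsAbelianGalois ℚ M] {q : ℕ} (hq : q.Prime)
    (h : ∀ g ∈ inertiaAt M q, ∃ k : ℕ, k.Coprime q ∧ g ^ k = 1) :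
    Nat.card (inertiaAt M q) ≤ q - 1 := by
  obtain ⟨P, hP, hqP, heq⟩ := exists_inertiaAt_eq_inertia M hq
  rw [heq] at h ⊢
  obtain ⟨d, hd⟩ := exists_smul_sub_pow_mem hq hqP
  have := IsGaloisGroup.faithful ℤ (G := Gal(M/ℚ)) (B := 𝓞 M)
  exact card_inertia_le_sub_one (Ring.ne_bot_of_isMaximal_of_not_isField hP
    (RingOfIntegers.not_isField M)) hq.one_lt hqP hd (fun g _ => mul_comm' g d) h

end InertiaGroups

section RootsOfUnityAction

variable {k M : Type*} [Field k] [Field M] [Algebra k M] {σ : Gal(M/k)} {z : M}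

theorem pow_apply_eq_pow_pow {a : ℕ} (h : σ z = z ^ a) (j : ℕ) : (σ ^ j) z = z ^ a ^ j := by
  induction j with
  | zero => simp
  | succ j ih => rw [pow_succ, AlgEquiv.mul_apply, h, map_pow, ih, ← pow_mul, ← pow_succ]

theorem exists_coprime_apply_eq_pow {n : ℕ} [NeZero n] (hz : IsPrimitiveRoot z n)
    (σ : Gal(M/k)) : ∃ a : ℕ, a.Coprime n ∧ σ z = z ^ a := by
  obtain ⟨a, -, ha, h⟩ := (hz.isPrimitiveRoot_iff).mp (hz.map_of_injective σ.injective)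
  exact ⟨a, ha, h.symm⟩

theorem pow_totient_apply_eq_self {n : ℕ} [NeZero n] (hz : IsPrimitiveRoot z n)
    (σ : Gal(M/k)) : (σ ^ n.totient) z = z := by
  obtain ⟨a, ha, h⟩ := exists_coprime_apply_eq_pow hz σ
  rw [pow_apply_eq_pow_pow h, pow_eq_pow_of_modEq (Nat.ModEq.pow_totient ha) hz.pow_eq_one,
    pow_one]

theorem apply_eq_self_of_coprime {a b : ℕ} (hab : a.Coprime b) (ha : σ (z ^ a) = z ^ a)
    (hb : σ (z ^ b) = z ^ b) : σ z = z := by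
  rcases eq_or_ne z 0 with rfl | hz
  · exact map_zero σ
  have hdiv {c : ℕ} (hc : σ (z ^ c) = z ^ c) : (σ z / z) ^ c = 1 := by
    rw [div_pow, ← map_pow, hc, div_self (pow_ne_zero c hz)]
  have h : (σ z / z) ^ a.gcd b = 1 := pow_gcd_eq_one.mpr ⟨hdiv ha, hdiv hb⟩
  rwa [hab.gcd_eq_one, pow_one, div_eq_one_iff_eq hz] at h

theorem pow_prime_pow_apply_eq_self {p e : ℕ} [NeZero p] (hz : IsPrimitiveRoot z (p ^ (e + 1)))
    (hσ : σ (z ^ p ^ e) = z ^ p ^ e) : (σ ^ p ^ e) z = z := by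
  obtain ⟨a, -, h⟩ := exists_coprime_apply_eq_pow hz σ
  have hprim : IsPrimitiveRoot (z ^ p ^ e) p := hz.pow (NeZero.pos _) (pow_succ p e)
  have ha : 1 ≡ a [MOD p] := by
    rw [map_pow, h, pow_right_comm] at hσ
    rw [hprim.eq_orderOf, ← (hprim.isOfFinOrder (NeZero.ne p)).pow_eq_pow_iff_modEq, hσ, pow_one]
  have hpow : 1 ≡ a ^ p ^ e [MOD p ^ (e + 1)] := by
    rw [Nat.modEq_iff_dvd] at ha ⊢
    simpa using dvd_sub_pow_of_dvd_sub ha e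
  rw [pow_apply_eq_pow_pow h, ← pow_eq_pow_of_modEq hpow hz.pow_eq_one, pow_one]

end RootsOfUnityAction

section InertiaAction

variable {M : Type*} [Field M] [NumberField M]

theorem card_inertiaAt_le_of_coprime [IsAbelianGalois ℚ M] {q r N : ℕ} (hq : q.Prime)
    (hr : r.Coprime q) (hN : N.Coprime q) {ζ : M} (hζ : IsPrimitiveRoot ζ (q * r))
    (hexp : ∀ g : Gal(M/ℚ), (g ^ N) ζ = ζ → g ^ N = 1) : Nat.card (inertiaAt M q) ≤ q - 1 := by
  have : Fact q.Prime := ⟨hq⟩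
  have hr0 : r ≠ 0 := by
    rintro rfl
    exact hq.ne_one (by simpa using hr)
  have hζr : IsPrimitiveRoot (ζ ^ r) q :=
    hζ.pow (Nat.pos_of_ne_zero (mul_ne_zero hq.ne_zero hr0)) (mul_comm q r)
  refine card_inertiaAt_le hq fun g hg => ⟨(q - 1) * N, ?_, ?_⟩
  · exact Nat.Coprime.mul_left (Nat.coprime_self_sub_left hq.one_le |>.mpr (by simp)) hN
  · rw [pow_mul]
    refine hexp _ (apply_eq_self_of_coprime hr ?_ ?_)
    · have h := pow_totient_apply_eq_self hζr g
      rw [Nat.totient_prime hq] at h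
      exact Subgroup.pow_mem (MulAction.stabilizer Gal(M/ℚ) (ζ ^ r)) h N
    · refine apply_eq_self_of_mem_inertiaAt (q := q) hr ?_ (pow_mem (pow_mem hg _) N)
      rw [← pow_mul, hζ.pow_eq_one]

theorem exists_gal_apply_eq_pow_and_pow_eq_one [Normal ℚ M] {s r N j k : ℕ} [NeZero (s * r)]
    (hsr : s.Coprime r) {ζ : M} (hζ : IsPrimitiveRoot ζ (s * r))
    (hexp : ∀ g : Gal(M/ℚ), (g ^ N) ζ = ζ → g ^ N = 1) (hk : k.Coprime s) (hNj : N ∣ j)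
    (hkj : k ^ j ≡ 1 [MOD s]) : ∃ σ : Gal(M/ℚ), σ (ζ ^ r) = (ζ ^ r) ^ k ∧ σ ^ j = 1 := by
  obtain ⟨a, has, har⟩ := Nat.chineseRemainder hsr k 1
  have ha : a.Coprime (s * r) := by
    refine Nat.Coprime.mul_right ?_ ?_
    · rwa [Nat.Coprime, has.gcd_eq]
    · rw [Nat.Coprime, har.gcd_eq, Nat.gcd_one_left]
  obtain ⟨σ, hσ⟩ := exists_gal_apply_eq_pow hζ ha
  have hζs : (ζ ^ r) ^ s = 1 := by rw [← pow_mul, mul_comm, hζ.pow_eq_one]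
  refine ⟨σ, ?_, ?_⟩
  · rw [map_pow, hσ, pow_right_comm, pow_eq_pow_of_modEq has hζs]
  · obtain ⟨i, rfl⟩ := hNj
    have hσj : (σ ^ (N * i)) ζ = ζ := by
      rw [pow_apply_eq_pow_pow hσ]
      have h : a ^ (N * i) ≡ 1 [MOD s * r] :=
        (Nat.modEq_and_modEq_iff_modEq_mul hsr).mp
          ⟨(has.pow _).trans hkj, by simpa using har.pow (N * i)⟩
      rw [pow_eq_pow_of_modEq h hζ.pow_eq_one, pow_one]
    rw [mul_comm, pow_mul] at hσj ⊢
    exact hexp _ hσj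

end InertiaAction

section CardSup

variable {G : Type*} [Group G] [IsMulCommutative G]

theorem natCard_sup_le (H K : Subgroup G) :
    Nat.card (H ⊔ K : Subgroup G) ≤ Nat.card H * Nat.card K := by
  rw [← SetLike.coe_sort_coe, Subgroup.mul_normal]
  exact Set.natCard_mul_le

theorem natCard_finset_sup_le {ι : Type*} (s : Finset ι) (H : ι → Subgroup G) :
    Nat.card (s.sup H : Subgroup G) ≤ ∏ i ∈ s, Nat.card (H i) := by
  classical
  induction s using Finset.induction_on with
  | empty => simp
  | insert a s ha ih =>
    rw [Finset.sup_insert, Finset.prod_insert ha]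
    exact (natCard_sup_le _ _).trans (Nat.mul_le_mul_left _ ih)

end CardSup

section ComplementAtP

theorem exists_gal_sq_eq_one_and_apply_eq_inv (M : Type*) [Field M] [NumberField M]
    [IsGalois ℚ M] : ∃ c : Gal(M/ℚ), c ^ 2 = 1 ∧ ∀ (z : M) (n : ℕ), n ≠ 0 → z ^ n = 1 →
      c z = z⁻¹ := by
  let φ : M →+* ℂ := Classical.arbitrary (M →+* ℂ)
  obtain ⟨σ, hσ⟩ := ComplexEmbedding.exists_comp_symm_eq_of_comp_eq (k := ℚ) φ
    ((starRingEnd ℂ).comp φ) (Subsingleton.elim _ _)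
  have hc (x : M) : φ (σ.symm x) = starRingEnd ℂ (φ x) := RingHom.congr_fun hσ x
  refine ⟨σ.symm, AlgEquiv.ext fun x => φ.injective ?_, fun z n hn hz => φ.injective ?_⟩
  · rw [pow_two, AlgEquiv.mul_apply, hc, hc, Complex.conj_conj, AlgEquiv.one_apply]
  · have hnorm : ‖φ z‖ = 1 :=
      Complex.norm_eq_one_of_pow_eq_one (by rw [← map_pow, hz, map_one]) hn
    rw [hc, map_inv₀, Complex.inv_eq_conj hnorm]

variable {M : Type*} [Field M] [NumberField M] [IsAbelianGalois ℚ M] {r : ℕ} [NeZero r] {ζ : M}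

theorem exists_subgroup_card_le_totient_of_isCyclic {s N : ℕ} [NeZero s] [IsCyclic (ZMod s)ˣ]
    (hsr : s.Coprime r) (hζ : IsPrimitiveRoot ζ (s * r))
    (hexp : ∀ g : Gal(M/ℚ), (g ^ N) ζ = ζ → g ^ N = 1) (hN : N ∣ s.totient) :
    ∃ C : Subgroup Gal(M/ℚ), Nat.card C ≤ s.totient ∧
      ∀ g : Gal(M/ℚ), ∃ c ∈ C, c (ζ ^ r) = g (ζ ^ r) := by
  obtain ⟨u, hu⟩ := IsCyclic.exists_generator (α := (ZMod s)ˣ)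
  have hku : ((u : ZMod s).val : ZMod s) = u := ZMod.natCast_zmod_val _
  obtain ⟨σ, hσ, hσ1⟩ := exists_gal_apply_eq_pow_and_pow_eq_one hsr hζ hexp
    (ZMod.val_coe_unit_coprime u) hN (Nat.ModEq.pow_totient (ZMod.val_coe_unit_coprime u))
  refine ⟨Subgroup.zpowers σ, ?_, fun g => ?_⟩
  · rw [Nat.card_zpowers]
    exact orderOf_le_of_pow_eq_one (Nat.totient_pos.mpr (NeZero.pos s)) hσ1
  · have hw : IsPrimitiveRoot (ζ ^ r) s := hζ.pow (NeZero.pos _) (mul_comm s r)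
    obtain ⟨a, ha, hga⟩ := exists_coprime_apply_eq_pow hw g
    obtain ⟨i, hi⟩ := (mem_powers_iff_mem_zpowers (x := u)).mpr (hu (ZMod.unitOfCoprime a ha))
    refine ⟨σ ^ i, pow_mem (Subgroup.mem_zpowers σ) i, ?_⟩
    rw [hga, pow_apply_eq_pow_pow hσ]
    refine pow_eq_pow_of_modEq ((ZMod.natCast_eq_natCast_iff _ _ s).mp ?_) hw.pow_eq_one
    rw [Nat.cast_pow, hku, ← ZMod.coe_unitOfCoprime a ha, ← hi]
    rfl

theorem five_pow_two_pow_modEq_one (m : ℕ) : 5 ^ 2 ^ (m + 1) ≡ 1 [MOD 2 ^ (m + 3)] := by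
  rw [← ZMod.natCast_eq_natCast_iff, ← ZMod.orderOf_five (m + 1)]
  simp [pow_orderOf_eq_one]

theorem exists_subgroup_card_le_totient_two_pow {m : ℕ} (hr : (2 ^ (m + 3)).Coprime r)
    (hζ : IsPrimitiveRoot ζ (2 ^ (m + 3) * r))
    (hexp : ∀ g : Gal(M/ℚ), (g ^ 2 ^ m) ζ = ζ → g ^ 2 ^ m = 1) :
    ∃ C : Subgroup Gal(M/ℚ), Nat.card C ≤ (2 ^ (m + 3)).totient ∧
      ∀ g : Gal(M/ℚ), ∃ c ∈ C, c ((ζ ^ r) ^ 2 ^ m) = g ((ζ ^ r) ^ 2 ^ m) := by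
  obtain ⟨σ, hσ, hσ1⟩ := exists_gal_apply_eq_pow_and_pow_eq_one hr hζ hexp (k := 5)
    (Nat.Coprime.pow_right _ (by norm_num)) (pow_dvd_pow 2 m.le_succ)
    (five_pow_two_pow_modEq_one m)
  obtain ⟨c, hc1, hc⟩ := exists_gal_sq_eq_one_and_apply_eq_inv M
  have hu : IsPrimitiveRoot ((ζ ^ r) ^ 2 ^ m) 8 :=
    (hζ.pow (NeZero.pos _) (mul_comm _ r)).pow (NeZero.pos _) (pow_add 2 m 3)
  set u := (ζ ^ r) ^ 2 ^ m with hu_def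
  have hσu : σ u = u ^ 5 := by rw [hu_def, map_pow, hσ, pow_right_comm]
  have hcu : c u = u ^ 7 := by
    rw [hc u 8 (by norm_num) hu.pow_eq_one]
    exact (eq_inv_of_mul_eq_one_left ((pow_succ u 7).symm.trans hu.pow_eq_one)).symm
  refine ⟨Subgroup.zpowers c ⊔ Subgroup.zpowers σ, ?_, fun g => ?_⟩
  · rw [Nat.totient_prime_pow_succ Nat.prime_two, Nat.add_one_sub_one, mul_one, pow_succ']
    refine (natCard_sup_le _ _).trans (Nat.mul_le_mul ?_ ?_) <;> rw [Nat.card_zpowers]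
    · exact orderOf_le_of_pow_eq_one two_pos hc1
    · exact orderOf_le_of_pow_eq_one (by positivity) hσ1
  · obtain ⟨a, ha, hga⟩ := exists_coprime_apply_eq_pow hu g
    have hcC := Subgroup.mem_sup_left (T := Subgroup.zpowers σ) (Subgroup.mem_zpowers c)
    have hσC := Subgroup.mem_sup_right (S := Subgroup.zpowers c) (Subgroup.mem_zpowers σ)
    have hodd : a % 2 = 1 :=
      Nat.odd_iff.mp (Nat.coprime_two_right.mp (ha.coprime_dvd_right (by norm_num)))
    rw [hga, ← pow_mod_orderOf, ← hu.eq_orderOf]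
    have hmod : a % 8 = 1 ∨ a % 8 = 3 ∨ a % 8 = 5 ∨ a % 8 = 7 := by lia
    rcases hmod with h | h | h | h <;> rw [h]
    · exact ⟨1, one_mem _, (pow_one u).symm⟩
    · refine ⟨c * σ, mul_mem hcC hσC, ?_⟩
      rw [AlgEquiv.mul_apply, hσu, map_pow, hcu, ← pow_mul]
      exact pow_eq_pow_of_modEq (by decide) hu.pow_eq_one
    · exact ⟨σ, hσC, hσu⟩
    · exact ⟨c, hcC, hcu⟩

end ComplementAtP

section TamePart

theorem totient_eq_prod_primeFactors_sub_one {n : ℕ} (hn : Squarefree n) :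
    n.totient = ∏ q ∈ n.primeFactors, (q - 1) := by
  have h := Nat.totient_mul_prod_primeFactors n
  rw [Nat.prod_primeFactors_of_squarefree hn, mul_comm] at h
  exact Nat.eq_of_mul_eq_mul_left (Nat.pos_of_ne_zero hn.ne_zero) h

variable {M : Type*} [Field M] [NumberField M] [IsAbelianGalois ℚ M]

theorem exists_subgroup_card_le_totient_forall_inertiaAt_le {s r N : ℕ} (hr : Squarefree r)
    (hsr : s.Coprime r) (hN : N.Coprime r) {ζ : M} (hζ : IsPrimitiveRoot ζ (s * r))
    (hexp : ∀ g : Gal(M/ℚ), (g ^ N) ζ = ζ → g ^ N = 1) :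
    ∃ H : Subgroup Gal(M/ℚ), Nat.card H ≤ r.totient ∧
      (∀ g ∈ H, g (ζ ^ r) = ζ ^ r) ∧ ∀ q ∈ r.primeFactors, inertiaAt M q ≤ H := by
  refine ⟨r.primeFactors.sup (inertiaAt M), ?_, ?_, fun q hq => Finset.le_sup hq⟩
  · rw [totient_eq_prod_primeFactors_sub_one hr]
    refine (natCard_finset_sup_le _ _).trans (Finset.prod_le_prod' fun q hq => ?_)
    obtain ⟨hqp, ⟨t, rfl⟩, -⟩ := Nat.mem_primeFactors.mp hq
    have hqt := Nat.coprime_of_squarefree_mul hr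
    rw [mul_left_comm] at hζ
    exact card_inertiaAt_le_of_coprime hqp (.mul_left hsr.coprime_mul_right_right hqt.symm)
      hN.coprime_mul_right_right hζ hexp
  · suffices h : r.primeFactors.sup (inertiaAt M) ≤ MulAction.stabilizer Gal(M/ℚ) (ζ ^ r) from
      fun g hg => h hg
    refine Finset.sup_le fun q hq g hg => ?_
    refine apply_eq_self_of_mem_inertiaAt
      (hsr.coprime_dvd_right (Nat.dvd_of_mem_primeFactors hq)) ?_ hg
    rw [← pow_mul, mul_comm, hζ.pow_eq_one]

end TamePart

section WildPart

theorem mem_fixingSubgroup_adjoin_simple_iff {k M : Type*} [Field k] [Field M] [Algebra k M]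
    {z : M} {g : Gal(M/k)} :
    g ∈ (IntermediateField.adjoin k {z}).fixingSubgroup ↔ g z = z := by
  rw [IntermediateField.mem_fixingSubgroup_iff]
  exact (IntermediateField.forall_mem_adjoin_smul_eq_self_iff k g).trans (by simp)

theorem inv_mul_apply_eq_self {k M : Type*} [Field k] [Field M] [Algebra k M] {c g : Gal(M/k)}
    {u : M} (h : c u = g u) : (c⁻¹ * g) u = u := by
  rw [AlgEquiv.mul_apply, ← h]
  exact inv_smul_smul c u

theorem fixingSubgroup_le_of_forall_pow_mem {k M : Type*} [Field k] [Field M] [Algebra k M]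
    [FiniteDimensional k M] [IsAbelianGalois k M] {F : IntermediateField k M} {p : ℕ}
    [Fact p.Prime] {z : M} (hz : IsPrimitiveRoot z p) (hzF : z ∈ F) {T : Subgroup Gal(M/k)}
    (hT : ∀ g ∈ F.fixingSubgroup, ∃ j, g ^ p ^ j ∈ T)
    (h : ∀ α : M, α ^ p ∈ F → (∀ g ∈ F.fixingSubgroup, g ∈ T → g α = α) →
      ∀ g ∈ F.fixingSubgroup, g α = α) : F.fixingSubgroup ≤ T := by
  have hz' : IsPrimitiveRoot (⟨z, hzF⟩ : F) p :=
    hz.of_map_of_injective (f := algebraMap F M) (algebraMap F M).injective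
  let e := IntermediateField.fixingSubgroupEquiv F
  let A : Subgroup Gal(M/F) := T.comap (F.fixingSubgroup.subtype.comp e.symm.toMonoidHom)
  have hA : A = ⊤ := by
    refine eq_top_of_forall_pow_eq hz' (fun g => ?_) fun α a hα hαA g => ?_
    · obtain ⟨j, hj⟩ := hT (e.symm g) (e.symm g).2
      exact ⟨j, by simpa [A] using hj⟩
    · refine h α (hα ▸ a.2) (fun g hg hgT => ?_) (e.symm g) (e.symm g).2
      exact hαA (e ⟨g, hg⟩) (by simpa [A] using hgT)
  intro g hg
  have hmem : e ⟨g, hg⟩ ∈ A := hA ▸ Subgroup.mem_top _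
  simpa [A] using hmem

variable {M : Type*} [Field M] [NumberField M] [IsAbelianGalois ℚ M]

theorem apply_eq_self_of_mem_inertiaAt_of_pow_mem {p : ℕ} [Fact p.Prime] {u : M}
    (hu : IsPrimitiveRoot u (p ^ 3)) {g : Gal(M/ℚ)} (hg : g ∈ inertiaAt M p) (hgu : g u = u)
    {α : M} (hα : α ^ p ∈ IntermediateField.adjoin ℚ {u ^ p ^ 2}) : g α = α := by
  obtain ⟨P, hP, hpP, hI⟩ := exists_inertiaAt_eq_inertia M (Fact.out : p.Prime)
  rw [hI] at hg
  rcases eq_or_ne p 2 with rfl | hp2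
  · have hu4 : u ^ 4 = -1 :=
      (hu.pow (NeZero.pos _) (show 2 ^ 3 = 4 * 2 by norm_num)).eq_neg_one_of_two_right
    have hbot : IntermediateField.adjoin ℚ {u ^ 2 ^ 2} = ⊥ := by
      rw [IntermediateField.adjoin_simple_eq_bot_iff]
      norm_num [hu4]
    obtain ⟨a, ha⟩ := IntermediateField.mem_bot.mp (hbot ▸ hα)
    refine apply_eq_self_of_mem_inertia_of_sq_eq (i := u ^ 2) (r := u - u ^ 3) hpP hg
      (by rw [← pow_mul, hu4]) (by rw [map_pow, hgu])
      (by linear_combination (u ^ 2 - 2) * hu4) (by rw [map_sub, map_pow, hgu]) ha.symm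
  · let F := IntermediateField.adjoin ℚ {u ^ p ^ 2}
    have hz : IsPrimitiveRoot (u ^ p ^ 2) p := hu.pow (NeZero.pos _) (pow_succ p 2)
    have : IsCyclotomicExtension {p} ℚ F := hz.intermediateField_adjoin_isCyclotomicExtension ℚ
    have hζ : IsPrimitiveRoot (IntermediateField.AdjoinSimple.gen ℚ (u ^ p ^ 2)) p :=
      hz.of_map_of_injective (f := algebraMap F M) (algebraMap F M).injective
    have hgF : g ∈ F.fixingSubgroup :=
      mem_fixingSubgroup_adjoin_simple_iff.mpr (by rw [map_pow, hgu])
    exact apply_eq_self_of_mem_inertia_of_pow_eq (g := F.fixingSubgroupEquiv ⟨g, hgF⟩)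
      (w := u ^ p) (a := ⟨α ^ p, hα⟩) hζ hp2 hpP hg
      ((pow_mul u p p).symm.trans (congrArg (u ^ ·) (sq p).symm))
      ((map_pow g u p).trans (congrArg (· ^ p) hgu)) rfl

theorem exists_mem_inertiaAt_mem_sup_apply_eq {p n : ℕ} [NeZero n] {u : M}
    (hu : IsPrimitiveRoot u n) {H C : Subgroup Gal(M/ℚ)} (hHu : ∀ g ∈ H, g u = u)
    (hHI : H ⊔ inertiaAt M p = ⊤) (hC : ∀ g : Gal(M/ℚ), ∃ c ∈ C, c u = g u) (g : Gal(M/ℚ)) :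
    ∃ i ∈ inertiaAt M p, i ∈ H ⊔ C ∧ i u = g u := by
  obtain ⟨c, hc, hcu⟩ := hC g
  obtain ⟨h, hh, i, hi, rfl⟩ := Subgroup.mem_sup_of_normal_left.mp (hHI ▸ Subgroup.mem_top c)
  refine ⟨i, hi, ?_, ?_⟩
  · simpa using mul_mem (Subgroup.mem_sup_left (inv_mem hh)) (Subgroup.mem_sup_right (S := H) hc)
  · obtain ⟨a, -, ha⟩ := exists_coprime_apply_eq_pow hu i
    rw [← hcu, AlgEquiv.mul_apply, ha, map_pow, hHu h hh]

theorem fixingSubgroup_adjoin_simple_le_sup {p : ℕ} [Fact p.Prime] {u : M}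
    (hu : IsPrimitiveRoot u (p ^ 3)) {H C : Subgroup Gal(M/ℚ)} (hHu : ∀ g ∈ H, g u = u)
    (hHI : H ⊔ inertiaAt M p = ⊤) (hC : ∀ g : Gal(M/ℚ), ∃ c ∈ C, c u = g u)
    (hpow : ∀ g ∈ inertiaAt M p, g (u ^ p ^ 2) = u ^ p ^ 2 → ∃ k, g ^ p ^ k = 1) :
    (IntermediateField.adjoin ℚ {u ^ p ^ 2}).fixingSubgroup ≤ H ⊔ C := by
  let F := IntermediateField.adjoin ℚ {u ^ p ^ 2}
  have hmemF {g : Gal(M/ℚ)} : g ∈ F.fixingSubgroup ↔ g (u ^ p ^ 2) = u ^ p ^ 2 :=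
    mem_fixingSubgroup_adjoin_simple_iff
  have hHF {h : Gal(M/ℚ)} (hh : h ∈ H) : h ∈ F.fixingSubgroup :=
    hmemF.mpr (by rw [map_pow, hHu h hh])
  refine fixingSubgroup_le_of_forall_pow_mem (hu.pow (NeZero.pos _) (pow_succ p 2))
    (IntermediateField.mem_adjoin_simple_self ℚ _) (fun g hg => ?_) fun α hα hfix g hg => ?_
    <;> obtain ⟨h, hh, i, hi, rfl⟩ :=
      Subgroup.mem_sup_of_normal_left.mp (hHI ▸ Subgroup.mem_top g)
    <;> have hiF : i ∈ F.fixingSubgroup := by simpa using mul_mem (inv_mem (hHF hh)) hg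
  · obtain ⟨k, hk⟩ := hpow i hi (hmemF.mp hiF)
    refine ⟨k, Subgroup.mem_sup_left ?_⟩
    rw [Commute.mul_pow (mul_comm' h i), hk, mul_one]
    exact pow_mem hh _
  · obtain ⟨j, hj, hjHC, hju⟩ := exists_mem_inertiaAt_mem_sup_apply_eq hu hHu hHI hC i
    have hjF : j ∈ F.fixingSubgroup :=
      hmemF.mpr (by rw [map_pow, hju, ← map_pow, hmemF.mp hiF])
    have hji : (j⁻¹ * i) α = α := apply_eq_self_of_mem_inertiaAt_of_pow_mem hu
      (mul_mem (inv_mem hj) hi) (inv_mul_apply_eq_self hju) hα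
    calc (h * i) α = (h * j) ((j⁻¹ * i) α) := by
          rw [← AlgEquiv.mul_apply, mul_assoc, mul_inv_cancel_left]
      _ = α := by
          rw [hji]
          exact hfix _ (mul_mem (hHF hh) hjF) (mul_mem (Subgroup.mem_sup_left hh) hjHC)

theorem sup_eq_top_of_forall_exists_apply_eq {p : ℕ} [Fact p.Prime] {u : M}
    (hu : IsPrimitiveRoot u (p ^ 3)) {H C : Subgroup Gal(M/ℚ)} (hHu : ∀ g ∈ H, g u = u)
    (hHI : H ⊔ inertiaAt M p = ⊤) (hC : ∀ g : Gal(M/ℚ), ∃ c ∈ C, c u = g u)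
    (hpow : ∀ g ∈ inertiaAt M p, g (u ^ p ^ 2) = u ^ p ^ 2 → ∃ k, g ^ p ^ k = 1) :
    H ⊔ C = ⊤ := by
  refine (Subgroup.eq_top_iff' _).mpr fun g => ?_
  obtain ⟨c, hc, hcu⟩ := hC g
  have hcg : c⁻¹ * g ∈ H ⊔ C := fixingSubgroup_adjoin_simple_le_sup hu hHu hHI hC hpow <|
    mem_fixingSubgroup_adjoin_simple_iff.mpr (by rw [map_pow, inv_mul_apply_eq_self hcu])
  simpa using mul_mem (Subgroup.mem_sup_right (S := H) hc) hcg

end WildPart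

section DegreeBound

variable {M : Type*} [Field M] [NumberField M] {p m r : ℕ} [Fact p.Prime] {ζ : M}

theorem pow_eq_one_of_mem_inertiaAt (hpr : (p ^ (m + 3)).Coprime r)
    (hζ : IsPrimitiveRoot ζ (p ^ (m + 3) * r)) (hr : r ≠ 0)
    (hexp : ∀ g : Gal(M/ℚ), (g ^ p ^ m) ζ = ζ → g ^ p ^ m = 1) {g : Gal(M/ℚ)}
    (hg : g ∈ inertiaAt M p) (hgu : g ((ζ ^ r) ^ p ^ (m + 2)) = (ζ ^ r) ^ p ^ (m + 2)) :
    g ^ p ^ (m + 2) = 1 := by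
  have hw : IsPrimitiveRoot (ζ ^ r) (p ^ (m + 2 + 1)) :=
    hζ.pow (mul_pos (NeZero.pos _) hr.bot_lt) (mul_comm _ r)
  have hfix : (g ^ p ^ (m + 2)) ζ = ζ := by
    refine apply_eq_self_of_coprime hpr ?_ (pow_prime_pow_apply_eq_self hw hgu)
    have hrp : r.Coprime p := (Nat.Coprime.coprime_dvd_left (dvd_pow_self p (by lia)) hpr).symm
    refine apply_eq_self_of_mem_inertiaAt hrp ?_ (pow_mem hg _)
    rw [← pow_mul, hζ.pow_eq_one]
  rw [add_comm, pow_add, pow_mul] at hfix ⊢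
  exact hexp _ hfix

variable [IsAbelianGalois ℚ M]

theorem exists_subgroup_card_le_totient_prime_pow [NeZero r] (hpr : (p ^ (m + 3)).Coprime r)
    (hζ : IsPrimitiveRoot ζ (p ^ (m + 3) * r))
    (hexp : ∀ g : Gal(M/ℚ), (g ^ p ^ m) ζ = ζ → g ^ p ^ m = 1) :
    ∃ C : Subgroup Gal(M/ℚ), Nat.card C ≤ (p ^ (m + 3)).totient ∧
      ∀ g : Gal(M/ℚ), ∃ c ∈ C, c ((ζ ^ r) ^ p ^ m) = g ((ζ ^ r) ^ p ^ m) := by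
  have hp : p.Prime := Fact.out
  rcases eq_or_ne p 2 with rfl | hp2
  · exact exists_subgroup_card_le_totient_two_pow hpr hζ hexp
  · have := ZMod.isCyclic_units_of_prime_pow p hp hp2 (m + 3)
    have hN : p ^ m ∣ (p ^ (m + 3)).totient := by
      rw [Nat.totient_prime_pow_succ hp]
      exact (pow_dvd_pow p (Nat.le_add_right m 2)).mul_right _
    obtain ⟨C, hC, h⟩ := exists_subgroup_card_le_totient_of_isCyclic hpr hζ hexp hN
    refine ⟨C, hC, fun g => ?_⟩
    obtain ⟨c, hc, hcg⟩ := h g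
    exact ⟨c, hc, by rw [map_pow, hcg, ← map_pow]⟩

theorem finrank_le_totient_of_inertiaAt_eq_bot (hr : Squarefree r) (hpr : (p ^ (m + 3)).Coprime r)
    (hζ : IsPrimitiveRoot ζ (p ^ (m + 3) * r))
    (hexp : ∀ g : Gal(M/ℚ), (g ^ p ^ m) ζ = ζ → g ^ p ^ m = 1)
    (hram : ∀ q : ℕ, q.Prime → ¬ q ∣ p * r → inertiaAt M q = ⊥) :
    Module.finrank ℚ M ≤ (p ^ (m + 3) * r).totient := by
  have : NeZero r := ⟨hr.ne_zero⟩
  obtain ⟨H, hH, hHw, hHq⟩ := exists_subgroup_card_le_totient_forall_inertiaAt_le hr hpr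
    (hpr.coprime_dvd_left (pow_dvd_pow p (Nat.le_add_right m 3))) hζ hexp
  obtain ⟨C, hC, hCu⟩ := exists_subgroup_card_le_totient_prime_pow hpr hζ hexp
  have hu : IsPrimitiveRoot ((ζ ^ r) ^ p ^ m) (p ^ 3) :=
    (hζ.pow (NeZero.pos _) (mul_comm _ r)).pow (NeZero.pos _) (pow_add p m 3)
  have hHI : H ⊔ inertiaAt M p = ⊤ := eq_top_of_forall_inertiaAt_le fun q hq => by
    by_cases hqpr : q ∣ p * r
    · rcases hq.dvd_mul.mp hqpr with hqp | hqr
      · rw [(Nat.prime_dvd_prime_iff_eq hq Fact.out).mp hqp]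
        exact le_sup_right
      · exact (hHq q (Nat.mem_primeFactors.mpr ⟨hq, hqr, hr.ne_zero⟩)).trans le_sup_left
    · rw [hram q hq hqpr]
      exact bot_le
  have hHC : H ⊔ C = ⊤ := by
    refine sup_eq_top_of_forall_exists_apply_eq hu (fun g hg => by rw [map_pow, hHw g hg]) hHI hCu
      fun g hg hgu => ⟨m + 2, pow_eq_one_of_mem_inertiaAt hpr hζ hr.ne_zero hexp hg ?_⟩
    rwa [pow_add p m 2, pow_mul]
  rw [← IsGalois.card_aut_eq_finrank, ← Subgroup.card_top, ← hHC, Nat.totient_mul hpr, mul_comm]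
  exact (natCard_sup_le H C).trans (Nat.mul_le_mul hH hC)

end DegreeBound

section Compositum

variable {F M : Type*} [Field F] [Field M] [Algebra F M] {E E' : IntermediateField F M}
  [IsAbelianGalois F E] [IsAbelianGalois F E']

theorem isAbelianGalois_of_sup_eq_top (h : E ⊔ E' = ⊤) : IsAbelianGalois F M := by
  have : IsGalois F M := by
    have : IsGalois F (E ⊔ E' : IntermediateField F M) := ⟨⟩
    rw [h] at this
    exact .of_algEquiv IntermediateField.topEquiv
  have hker : E.fixingSubgroup ⊓ E'.fixingSubgroup = ⊥ := by
    rw [← IntermediateField.fixingSubgroup_sup, h, IntermediateField.fixingSubgroup_top]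
  refine { is_comm.comm := fun σ τ => ?_ }
  rw [← inv_mul_eq_one, ← Subgroup.mem_bot, ← hker, ← E.restrictNormalHom_ker,
    ← E'.restrictNormalHom_ker]
  constructor <;> refine MonoidHom.mem_ker.mpr ?_ <;>
    rw [map_mul, map_inv, map_mul, map_mul, inv_mul_eq_one, mul_comm']

theorem isAbelianGalois_sup : IsAbelianGalois F (E ⊔ E' : IntermediateField F M) := by
  have hE : IsAbelianGalois F (IntermediateField.restrict (le_sup_left : E ≤ E ⊔ E')) :=
    .of_algHom (IntermediateField.restrictAlgEquiv le_sup_left).symm.toAlgHom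
  have hE' : IsAbelianGalois F (IntermediateField.restrict (le_sup_right : E' ≤ E ⊔ E')) :=
    .of_algHom (IntermediateField.restrictAlgEquiv le_sup_right).symm.toAlgHom
  refine isAbelianGalois_of_sup_eq_top (E := IntermediateField.restrict le_sup_left)
    (E' := IntermediateField.restrict le_sup_right) (IntermediateField.lift_injective _ ?_)
  rw [IntermediateField.lift_sup, IntermediateField.lift_restrict,
    IntermediateField.lift_restrict, IntermediateField.lift_top]

theorem isAbelianGalois_fieldRange_sup_adjoin_simple {K : Type*} [Field K] [Algebra F K]
    [IsAbelianGalois F K] (f : K →ₐ[F] M) {n : ℕ} [NeZero n] {ζ : M} (hζ : IsPrimitiveRoot ζ n) :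
    IsAbelianGalois F (f.fieldRange ⊔ IntermediateField.adjoin F {ζ} : IntermediateField F M) := by
  have : IsAbelianGalois F f.fieldRange := .of_algHom f.equivFieldRange.symm.toAlgHom
  have : IsCyclotomicExtension {n} F (IntermediateField.adjoin F {ζ}) :=
    (IntermediateField.isCyclotomicExtension_singleton_iff_eq_adjoin n F M _ hζ).mpr rfl
  have : IsAbelianGalois F (IntermediateField.adjoin F {ζ}) :=
    IsCyclotomicExtension.isAbelianGalois {n} F _
  exact isAbelianGalois_sup

theorem eq_one_of_apply_fieldRange_sup_adjoin_simple {K : Type*} [Field K] [Algebra F K]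
    {f : K →ₐ[F] M} {ζ : M}
    {g : Gal((f.fieldRange ⊔ IntermediateField.adjoin F {ζ} : IntermediateField F M)/F)}
    (hf : ∀ x, g ⟨f x, le_sup_left (α := IntermediateField F M) (f.mem_range_self x)⟩ = f x)
    (hζ : g ⟨ζ, le_sup_right (α := IntermediateField F M)
      (IntermediateField.mem_adjoin_simple_self F ζ)⟩ = ζ) : g = 1 := by
  have hadjoin : f.fieldRange ⊔ IntermediateField.adjoin F {ζ} =
      IntermediateField.adjoin F (Set.range f ∪ {ζ}) := by
    rw [IntermediateField.adjoin_union, ← AlgHom.coe_fieldRange, IntermediateField.adjoin_self]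
  refine AlgEquiv.coe_toAlgHom_injective
    (IntermediateField.algHom_ext_of_eq_adjoin F hadjoin fun y hy => Subtype.ext ?_)
  rcases hy with ⟨x, rfl⟩ | rfl
  · exact hf x
  · exact hζ

end Compositum

section PrimePowerDegree

variable {K : Type*} [Field K] [NumberField K] [IsAbelianGalois ℚ K] {p m r : ℕ} [Fact p.Prime]

theorem finrank_le_totient_of_card_eq_prime_pow {M : Type*} [Field M] [NumberField M]
    [IsAbelianGalois ℚ M] [Algebra K M] {ζ : M} (hK : Nat.card Gal(K/ℚ) = p ^ m)
    (hr : Squarefree r) (hpr : (p ^ (m + 3)).Coprime r)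
    (hdisc : ∀ q : ℕ, q.Prime → (q : ℤ) ∣ discr K → q ∣ p * r)
    (hζ : IsPrimitiveRoot ζ (p ^ (m + 3) * r))
    (hgen : ∀ g : Gal(M/ℚ), (∀ x : K, g (algebraMap K M x) = algebraMap K M x) → g ζ = ζ →
      g = 1) :
    Module.finrank ℚ M ≤ (p ^ (m + 3) * r).totient := by
  have heq_one {g : Gal(M/ℚ)} (hgK : AlgEquiv.restrictNormalHom K g = 1) (hgζ : g ζ = ζ) :
      g = 1 := by
    refine hgen g (fun x => ?_) hgζ
    have h := AlgEquiv.restrictNormal_commutes g K x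
    rw [show g.restrictNormal K = 1 from hgK] at h
    exact h.symm
  refine finrank_le_totient_of_inertiaAt_eq_bot hr hpr hζ (fun g hg => heq_one ?_ hg)
    fun q hq hqpr => (Subgroup.eq_bot_iff_forall _).mpr fun g hg => heq_one ?_ ?_
  · rw [map_pow, ← hK, pow_card_eq_one']
  · exact restrictNormalHom_eq_one_of_mem_inertiaAt hq (fun h => hqpr (hdisc q hq h)) hg
  · have hq' : (p * r).Coprime q := ((Nat.Prime.coprime_iff_not_dvd hq).mpr hqpr).symm
    have hcop : (p ^ (m + 3) * r).Coprime q :=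
      .mul_left (.pow_left _ hq'.coprime_mul_right) hq'.coprime_mul_left
    exact apply_eq_self_of_mem_inertiaAt hcop hζ.pow_eq_one hg

theorem apply_mem_adjoin_of_card_eq_prime_pow {Ω : Type*} [Field Ω] [CharZero Ω] (f : K →+* Ω)
    {ζ : Ω} (hK : Nat.card Gal(K/ℚ) = p ^ m)
    (hr : Squarefree r) (hpr : (p ^ (m + 3)).Coprime r)
    (hdisc : ∀ q : ℕ, q.Prime → (q : ℤ) ∣ discr K → q ∣ p * r)
    (hζ : IsPrimitiveRoot ζ (p ^ (m + 3) * r)) (x : K) :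
    f x ∈ IntermediateField.adjoin ℚ {ζ} := by
  let n := p ^ (m + 3) * r
  have : NeZero n := ⟨mul_ne_zero (NeZero.ne _) hr.ne_zero⟩
  let φ := f.toRatAlgHom
  let L := IntermediateField.adjoin ℚ {ζ}
  have : IsCyclotomicExtension {n} ℚ L :=
    (IntermediateField.isCyclotomicExtension_singleton_iff_eq_adjoin n ℚ Ω L hζ).mpr rfl
  have : FiniteDimensional ℚ φ.fieldRange := φ.equivFieldRange.toLinearEquiv.finiteDimensional
  have : FiniteDimensional ℚ L := IsCyclotomicExtension.finiteDimensional {n} ℚ L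
  let M := φ.fieldRange ⊔ L
  have : NumberField M := ⟨⟩
  have : IsAbelianGalois ℚ M := isAbelianGalois_fieldRange_sup_adjoin_simple φ hζ
  let z : M := ⟨ζ, le_sup_right (a := φ.fieldRange) (IntermediateField.mem_adjoin_simple_self ℚ ζ)⟩
  have hz : IsPrimitiveRoot z n :=
    hζ.of_map_of_injective (f := algebraMap M Ω) (algebraMap M Ω).injective
  have hφM (x : K) : f x ∈ M := le_sup_left (b := L) (φ.mem_range_self x)
  let _ : Algebra K M := (f.codRestrict M hφM).toAlgebra
  have hfinrank : Module.finrank ℚ M ≤ n.totient :=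
    finrank_le_totient_of_card_eq_prime_pow hK hr hpr hdisc hz fun g hgK hgz =>
      eq_one_of_apply_fieldRange_sup_adjoin_simple (f := φ) (ζ := ζ)
        (fun x => congrArg Subtype.val (hgK x)) (congrArg Subtype.val hgz)
  rw [← IsCyclotomicExtension.Rat.finrank n L] at hfinrank
  have hLM : L = M := IntermediateField.eq_of_le_of_finrank_le le_sup_right hfinrank
  change f x ∈ L
  exact hLM ▸ hφM x

end PrimePowerDegree

section CyclotomicImage

theorem exists_squarefree_coprime_forall_dvd_mul {p n : ℕ} (hp : p.Prime) (hn : n ≠ 0) :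
    ∃ r : ℕ, Squarefree r ∧ p.Coprime r ∧ ∀ q : ℕ, q.Prime → q ∣ n → q ∣ p * r := by
  have hrad : UniqueFactorizationMonoid.radical (ordCompl[p] n) ∣ ordCompl[p] n :=
    UniqueFactorizationMonoid.radical_dvd_self
  refine ⟨UniqueFactorizationMonoid.radical (ordCompl[p] n),
    UniqueFactorizationMonoid.squarefree_radical,
    (Nat.coprime_ordCompl hp hn).coprime_dvd_right hrad, fun q hq hqn => ?_⟩
  rw [← Nat.ordProj_mul_ordCompl_eq_self n p] at hqn
  rcases hq.dvd_mul.mp hqn with hqp | hqr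
  · exact (hq.dvd_of_dvd_pow hqp).mul_right _
  · exact ((UniqueFactorizationMonoid.dvd_radical_iff_of_irreducible hq
      (Nat.ordCompl_pos p hn).ne').mpr hqr).mul_left p

/-- The image of the embedding `f : K →+* Ω` lies in a cyclotomic field `ℚ(ζ) ⊆ Ω`. -/
def HasCyclotomicImage {K Ω : Type*} [Field K] [Field Ω] [CharZero Ω] (f : K →+* Ω) : Prop :=
  ∃ n ≠ 0, ∃ ζ : Ω, IsPrimitiveRoot ζ n ∧ ∀ x, f x ∈ IntermediateField.adjoin ℚ {ζ}

variable {K Ω : Type*} [Field K] [NumberField K] [Field Ω] [CharZero Ω] [IsAlgClosed Ω]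

theorem HasCyclotomicImage.of_sup_eq_top {f : K →+* Ω} {E E' : IntermediateField ℚ K}
    (h : E ⊔ E' = ⊤) (hE : HasCyclotomicImage (f.comp (algebraMap E K)))
    (hE' : HasCyclotomicImage (f.comp (algebraMap E' K))) : HasCyclotomicImage f := by
  obtain ⟨n, hn, z, hz, hEz⟩ := hE
  obtain ⟨n', hn', z', hz', hEz'⟩ := hE'
  have : NeZero (n * n') := ⟨mul_ne_zero hn hn'⟩
  obtain ⟨ζ, hζ⟩ := HasEnoughRootsOfUnity.exists_primitiveRoot Ω (n * n')
  have hle {w : Ω} (hw : w ^ (n * n') = 1) :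
      IntermediateField.adjoin ℚ {w} ≤ IntermediateField.adjoin ℚ {ζ} := by
    obtain ⟨i, -, rfl⟩ := hζ.eq_pow_of_pow_eq_one hw
    exact IntermediateField.adjoin_simple_le_iff.mpr
      (pow_mem (IntermediateField.mem_adjoin_simple_self ℚ ζ) i)
  have hcomap : E ⊔ E' ≤ (IntermediateField.adjoin ℚ {ζ}).comap f.toRatAlgHom := sup_le
    (fun x hx => hle (by rw [pow_mul, hz.pow_eq_one, one_pow]) (hEz ⟨x, hx⟩))
    (fun x hx => hle (by rw [pow_mul', hz'.pow_eq_one, one_pow]) (hEz' ⟨x, hx⟩))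
  rw [h] at hcomap
  exact ⟨n * n', NeZero.ne _, ζ, hζ, fun x => hcomap (IntermediateField.mem_top (x := x))⟩

variable [IsAbelianGalois ℚ K]

theorem hasCyclotomicImage_of_isPGroup {p : ℕ} [Fact p.Prime] (hK : IsPGroup p Gal(K/ℚ))
    (f : K →+* Ω) : HasCyclotomicImage f := by
  obtain ⟨m, hm⟩ := hK.exists_card_eq
  have hD : (discr K).natAbs ≠ 0 := Int.natAbs_ne_zero.mpr (discr_ne_zero K)
  obtain ⟨r, hr, hpr, hdvd⟩ := exists_squarefree_coprime_forall_dvd_mul (Fact.out : p.Prime) hD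
  have : NeZero (p ^ (m + 3) * r) := ⟨mul_ne_zero (NeZero.ne _) hr.ne_zero⟩
  obtain ⟨ζ, hζ⟩ := HasEnoughRootsOfUnity.exists_primitiveRoot Ω (p ^ (m + 3) * r)
  exact ⟨_, NeZero.ne _, ζ, hζ, apply_mem_adjoin_of_card_eq_prime_pow f hm hr (hpr.pow_left _)
    (fun q hq hqD => hdvd q hq (Int.natCast_dvd.mp hqD)) hζ⟩

theorem fixedField_zpowers_sup_eq_top_of_coprime {F L : Type*} [Field F] [Field L] [Algebra F L]
    [FiniteDimensional F L] [IsGalois F L] {σ τ : Gal(L/F)}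
    (h : (orderOf σ).Coprime (orderOf τ)) :
    IntermediateField.fixedField (Subgroup.zpowers σ) ⊔
      IntermediateField.fixedField (Subgroup.zpowers τ) = ⊤ := by
  rw [← IsGalois.fixedField_fixingSubgroup (_ ⊔ _), IntermediateField.fixingSubgroup_sup,
    IntermediateField.fixingSubgroup_fixedField, IntermediateField.fixingSubgroup_fixedField,
    (Subgroup.disjoint_of_coprime_natCard
      (by rwa [Nat.card_zpowers, Nat.card_zpowers])).eq_bot, IntermediateField.fixedField_bot]

theorem finrank_fixedField_zpowers_lt {F L : Type*} [Field F] [Field L] [Algebra F L]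
    [FiniteDimensional F L] {σ : Gal(L/F)} (hσ : σ ≠ 1) :
    Module.finrank F (IntermediateField.fixedField (Subgroup.zpowers σ)) < Module.finrank F L := by
  rw [← Module.finrank_mul_finrank F (IntermediateField.fixedField (Subgroup.zpowers σ)) L,
    IntermediateField.finrank_fixedField_eq_card, Nat.card_zpowers]
  have hone : orderOf σ ≠ 1 := mt orderOf_eq_one_iff.mp hσ
  have hpos : 0 < orderOf σ := orderOf_pos σ
  exact lt_mul_of_one_lt_right Module.finrank_pos (by lia)

theorem exists_prime_ne_of_forall_not_isPGroup {G : Type*} [Group G] [Finite G]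
    (h : ∀ p : ℕ, p.Prime → ¬ IsPGroup p G) :
    ∃ p q : ℕ, p.Prime ∧ q.Prime ∧ p ≠ q ∧ p ∣ Nat.card G ∧ q ∣ Nat.card G := by
  have hone : Nat.card G ≠ 1 := fun hG =>
    h 2 Nat.prime_two (IsPGroup.of_card (n := 0) (by rw [hG, pow_zero]))
  obtain ⟨p, hp, hpG⟩ := Nat.exists_prime_and_dvd hone
  by_contra! hall
  exact h p hp (IsPGroup.of_card (Nat.eq_prime_pow_of_unique_prime_dvd Nat.card_pos.ne'
    fun {q} hq hqG => by_contra fun hqp => hall p q hp hq (Ne.symm hqp) hpG hqG))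

theorem hasCyclotomicImage (f : K →+* Ω) : HasCyclotomicImage f := by
  induction hd : Module.finrank ℚ K using Nat.strong_induction_on generalizing K with
  | _ d ih =>
  by_cases hK : ∃ p : ℕ, p.Prime ∧ IsPGroup p Gal(K/ℚ)
  · obtain ⟨p, hp, hpK⟩ := hK
    have : Fact p.Prime := ⟨hp⟩
    exact hasCyclotomicImage_of_isPGroup hpK f
  · push Not at hK
    obtain ⟨p, q, hp, hq, hpq, hpG, hqG⟩ := exists_prime_ne_of_forall_not_isPGroup hK
    have : Fact p.Prime := ⟨hp⟩
    have : Fact q.Prime := ⟨hq⟩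
    obtain ⟨σ, hσ⟩ := exists_prime_orderOf_dvd_card' p hpG
    obtain ⟨τ, hτ⟩ := exists_prime_orderOf_dvd_card' q hqG
    have image_fixedField {ρ : Gal(K/ℚ)} (hρ : (orderOf ρ).Prime) :
        HasCyclotomicImage (f.comp
          (algebraMap (IntermediateField.fixedField (Subgroup.zpowers ρ)) K)) := by
      let E := IntermediateField.fixedField (Subgroup.zpowers ρ)
      have : IsAbelianGalois ℚ E := .tower_bot ℚ E K
      have : NumberField E := ⟨⟩
      refine ih (Module.finrank ℚ E) ?_ _ rfl
      rw [← hd]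
      exact finrank_fixedField_zpowers_lt fun h => hρ.ne_one (orderOf_eq_one_iff.mpr h)
    exact .of_sup_eq_top
      (fixedField_zpowers_sup_eq_top_of_coprime
        (by rw [hσ, hτ]; exact (Nat.coprime_primes hp hq).mpr hpq))
      (image_fixedField (hσ ▸ hp)) (image_fixedField (hτ ▸ hq))

end CyclotomicImage

section MinimalPolynomial

variable {Ω : Type*} [Field Ω] [CharZero Ω]

theorem hasCyclotomicImage_algHom [IsAlgClosed Ω] {K : Type*} [Field K] [inst : Algebra ℚ K]
    [FiniteDimensional ℚ K] [IsAbelianGalois ℚ K] (f : K →ₐ[ℚ] Ω) :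
    HasCyclotomicImage (f : K →+* Ω) := by
  have : CharZero K := algebraRat.charZero K
  obtain rfl : inst = DivisionRing.toRatAlgebra := Subsingleton.elim _ _
  have : NumberField K := ⟨⟩
  exact hasCyclotomicImage _

theorem isAbelianGalois_splittingField_iff {F : Type*} [Field F] {q : F[X]} (hq : q.Separable) :
    IsAbelianGalois F q.SplittingField ↔ ∀ σ τ : q.Gal, σ * τ = τ * σ where
  mp _ := mul_comm' (M := Gal(q.SplittingField/F))
  mpr h :=
    { toIsGalois := IsGalois.of_separable_splitting_field hq
      toIsMulCommutative := ⟨⟨h⟩⟩ }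

theorem commute_gal_minpoly_of_isAbelianGalois {F L : Type*} [Field F] [Field L] [Algebra F L]
    [IsAbelianGalois F L] (x : L) (σ τ : (minpoly F x).Gal) : σ * τ = τ * σ :=
  (isAbelianGalois_splittingField_iff (Algebra.IsSeparable.isSeparable F x)).mp
    (.of_algHom (IsSplittingField.lift _ (minpoly F x) (Normal.splits inferInstance x))) σ τ

theorem exists_algHom_splittingField_minpoly_mem_range {F L : Type*} [Field F] [Field L]
    [Algebra F L] [IsAlgClosed L] {x : L} (hx : IsIntegral F x) :
    ∃ f : (minpoly F x).SplittingField →ₐ[F] L, x ∈ f.range := by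
  let f : (minpoly F x).SplittingField →ₐ[F] L :=
    IsSplittingField.lift _ (minpoly F x) (IsAlgClosed.splits _)
  have hroot : x ∈ f '' (minpoly F x).rootSet (minpoly F x).SplittingField := by
    rw [Splits.image_rootSet (SplittingField.splits _) f, mem_rootSet]
    exact ⟨minpoly.ne_zero hx, minpoly.aeval F x⟩
  obtain ⟨y, -, hy⟩ := hroot
  exact ⟨f, y, hy⟩

theorem commute_gal_minpoly_of_mem_adjoin {n : ℕ} [NeZero n] {ζ d : Ω}
    (hζ : IsPrimitiveRoot ζ n) (hd : d ∈ IntermediateField.adjoin ℚ {ζ})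
    (σ τ : (minpoly ℚ d).Gal) : σ * τ = τ * σ := by
  let L := IntermediateField.adjoin ℚ {ζ}
  have : IsCyclotomicExtension {n} ℚ L :=
    (IntermediateField.isCyclotomicExtension_singleton_iff_eq_adjoin n ℚ Ω L hζ).mpr rfl
  have : IsAbelianGalois ℚ L := IsCyclotomicExtension.isAbelianGalois {n} ℚ L
  obtain ⟨y, rfl⟩ : ∃ y : L, algebraMap L Ω y = d := ⟨⟨d, hd⟩, rfl⟩
  revert σ τ
  rw [minpoly.algebraMap_eq (algebraMap L Ω).injective]
  exact commute_gal_minpoly_of_isAbelianGalois y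

theorem exists_mem_adjoin_of_commute_gal_minpoly [IsAlgClosed Ω] {d : Ω} (hd : IsIntegral ℚ d)
    (h : ∀ σ τ : (minpoly ℚ d).Gal, σ * τ = τ * σ) :
    ∃ n ≠ 0, ∃ ζ : Ω, IsPrimitiveRoot ζ n ∧ d ∈ IntermediateField.adjoin ℚ {ζ} := by
  have := (isAbelianGalois_splittingField_iff (minpoly.irreducible hd).separable).mpr h
  obtain ⟨f, x, hx⟩ := exists_algHom_splittingField_minpoly_mem_range hd
  obtain ⟨n, hn, ζ, hζ, hf⟩ := hasCyclotomicImage_algHom f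
  exact ⟨n, hn, ζ, hζ, hx ▸ hf x⟩

end MinimalPolynomial

end KroneckerWeber

theorem stmt_0_general {Ω : Type*} [Field Ω] [CharZero Ω] [IsAlgClosed Ω] (d : Ω)
    (hd : IsIntegral ℚ d) :
    (∃ (n : ℕ) (ζ : Ω), 0 < n ∧ IsPrimitiveRoot ζ n ∧ d ∈ Algebra.adjoin ℚ ({ζ} : Set Ω)) ↔
    ∀ σ τ : (minpoly ℚ d).Gal, σ * τ = τ * σ := by
  constructor
  · rintro ⟨n, ζ, hn, hζ, h⟩
    have : NeZero n := ⟨hn.ne'⟩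
    exact KroneckerWeber.commute_gal_minpoly_of_mem_adjoin hζ
      (IntermediateField.algebra_adjoin_le_adjoin ℚ _ h)
  · intro h
    obtain ⟨n, hn, ζ, hζ, hmem⟩ := KroneckerWeber.exists_mem_adjoin_of_commute_gal_minpoly hd h
    have hζalg : IsAlgebraic ℚ ζ :=
      (hζ.isIntegral (Nat.pos_of_ne_zero hn)).tower_top.isAlgebraic
    rw [← IntermediateField.mem_toSubalgebra,
      IntermediateField.adjoin_simple_toSubalgebra_of_isAlgebraic hζalg] at hmem
    exact ⟨n, ζ, Nat.pos_of_ne_zero hn, hζ, hmem⟩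

/-- An algebraic integer `d` lies in some cyclotomic field if and only if the Galois group of
the splitting field over `ℚ` of its minimal polynomial is abelian. -/
theorem stmt_0 (d : ℂ) (hd : IsIntegral ℤ d) :
    (∃ (n : ℕ) (ζ : ℂ), 0 < n ∧ IsPrimitiveRoot ζ n ∧ d ∈ Algebra.adjoin ℚ ({ζ} : Set ℂ)) ↔
    ∀ σ τ : (minpoly ℚ d).Gal, σ * τ = τ * σ :=
  stmt_0_general d hd.tower_top
end

section
/- The polynomial r₂(x) = x⁶ − 13x⁵ + 63x⁴ − 140x³ + 142x² − 59x + 7 is irreducible over ℚ and its Galois group over ℚ is the full symmetric group S₆; in particular its Galois group is non-abelian, so its roots are not cyclotomic integers. -/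
/-!
Reduction modulo `2` shows that `r₂` is irreducible, so its Galois group is transitive on the roots.
The ideal generated by `r₂` and its derivative in `ℤ[X]` contains a monic linear polynomial, so
modulo every prime of the splitting field all roots of `r₂` are simple except for at most one double
root. An inertia element fixes every root modulo its prime, so it is either trivial or a
transposition. As `ℚ` has no nontrivial unramified extension, the inertia subgroups generate the
Galois group, and a transitive permutation group generated by transpositions is the full symmetric
group. A root in a cyclotomic field would instead make the Galois group abelian.
-/

open Polynomial

open NumberField

theorem irreducible_of_isCoprime_X_pow_card_pow_sub_X {F : Type*} [Field F] [Finite F] {f : F[X]}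
    (hf : f.natDegree ≠ 0)
    (h : ∀ d ∈ Finset.Ioc 0 (f.natDegree / 2), IsCoprime f (X ^ Nat.card F ^ d - X)) :
    Irreducible f := by
  have hf0 : f ≠ 0 := ne_zero_of_natDegree_gt (Nat.pos_of_ne_zero hf)
  have hfu : ¬IsUnit f := fun hu ↦ hf (natDegree_eq_zero_of_isUnit hu)
  rw [irreducible_iff_lt_natDegree_lt hf0 hfu]
  intro q hq hqd hqf
  rw [Finset.mem_Ioc] at hqd
  obtain ⟨r, hr, hrq⟩ := exists_irreducible_of_natDegree_pos hqd.1
  have hrd : r.natDegree ∈ Finset.Ioc 0 (f.natDegree / 2) :=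
    Finset.mem_Ioc.2 ⟨hr.natDegree_pos, (natDegree_le_of_dvd hrq hq.ne_zero).trans hqd.2⟩
  exact hr.not_isUnit ((h _ hrd).isUnit_of_dvd' (hrq.trans hqf)
    (hr.natDegree_dvd_iff_dvd_X_pow_card_pow_sub_X.1 dvd_rfl))

theorem rootSet_map_algebraMap {R S T : Type*} [CommRing R] [CommRing S] [CommRing T] [IsDomain T]
    [Algebra R S] [Algebra R T] [Algebra S T] [IsScalarTower R S T] (f : R[X]) :
    (f.map (algebraMap R S)).rootSet T = f.rootSet T := by
  classical
  rw [rootSet_def, rootSet_def, aroots_map]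

section RootCollisions

variable {R : Type*} [CommRing R] {f g : R[X]}

theorem rootMultiplicity_le_one_add_of_mem_span (hg : g ≠ 0)
    (h : g ∈ Ideal.span {f, derivative f}) (a : R) :
    f.rootMultiplicity a ≤ 1 + g.rootMultiplicity a := by
  obtain ⟨u, v, huv⟩ := Ideal.mem_span_pair.1 h
  have hf : (X - C a) ^ f.rootMultiplicity a ∣ f := pow_rootMultiplicity_dvd f a
  have hdvd : (X - C a) ^ (f.rootMultiplicity a - 1) ∣ g := by
    rw [← huv]
    exact dvd_add (((pow_dvd_pow _ (Nat.sub_le _ 1)).trans hf).mul_left u)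
      ((pow_sub_one_dvd_derivative_of_pow_dvd hf).mul_left v)
  have := (le_rootMultiplicity_iff hg).2 hdvd
  lia

theorem card_roots_le_ncard_rootSet_add_natDegree_of_mem_span [IsDomain R] (hg : g ≠ 0)
    (h : g ∈ Ideal.span {f, derivative f}) :
    f.roots.card ≤ (f.rootSet R).ncard + g.natDegree := by
  classical
  have hle : f.roots ≤ f.roots.dedup + g.roots := by
    refine Multiset.le_iff_count.2 fun a ↦ ?_
    rw [Multiset.count_add, Multiset.count_dedup, count_roots, count_roots]
    split_ifs with ha
    · exact rootMultiplicity_le_one_add_of_mem_span hg h a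
    · rw [← count_roots, Multiset.count_eq_zero_of_notMem ha]
      exact Nat.zero_le _
  calc f.roots.card ≤ f.roots.dedup.card + g.roots.card := by
        simpa only [Multiset.card_add] using Multiset.card_le_card hle
    _ ≤ (f.rootSet R).ncard + g.natDegree := by
        gcongr
        · rw [rootSet_def, Set.ncard_coe_finset, aroots_def, Algebra.algebraMap_self, map_id]
          rfl
        · exact g.card_roots'

theorem natDegree_le_ncard_rootSet_add_natDegree_of_mem_span {S : Type*} [CommRing S] [IsDomain S]
    [Algebra R S] (hf : f.Monic) (hg : g.Monic) (hs : (f.map (algebraMap R S)).Splits)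
    (h : g ∈ Ideal.span {f, derivative f}) :
    f.natDegree ≤ (f.rootSet S).ncard + g.natDegree := by
  have hspan : g.map (algebraMap R S) ∈
      Ideal.span {f.map (algebraMap R S), derivative (f.map (algebraMap R S))} := by
    obtain ⟨u, v, rfl⟩ := Ideal.mem_span_pair.1 h
    exact Ideal.mem_span_pair.2 ⟨u.map _, v.map _, by
      rw [Polynomial.map_add, Polynomial.map_mul, Polynomial.map_mul, derivative_map]⟩
  have hle := card_roots_le_ncard_rootSet_add_natDegree_of_mem_span (hg.map _).ne_zero hspan
  rwa [← hs.natDegree_eq_card_roots, hf.natDegree_map, hg.natDegree_map,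
    rootSet_map_algebraMap] at hle

end RootCollisions

section Inertia

theorem card_inertia_eq_ramificationIdx {A C : Type*} (G : Type*) [CommRing A] [IsDomain A]
    [CommRing C] [IsDomain C] [Algebra A C] [Module.Finite A C] [Module.Flat A C] [Group G]
    [Finite G] [MulSemiringAction G C] [IsGaloisGroup G A C] (Q : Ideal C) [Q.IsPrime]
    [PerfectField (Q.under A).ResidueField] :
    Nat.card (Q.inertia G) = Q.ramificationIdx A := by
  rw [Ideal.card_inertia_eq_ramificationIdxIn (Q.under A) Q,
    Ideal.ramificationIdxIn_eq_ramificationIdx (Q.under A) Q G]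

theorem ramificationIdx_eq_one_of_inertia_le {A B C G : Type*} [CommRing A] [IsDomain A]
    [CommRing B] [IsDomain B] [CommRing C] [IsDomain C] [Algebra A B] [Algebra A C] [Algebra B C]
    [IsScalarTower A B C] [Module.Finite A C] [Module.Flat A C] [Module.Finite B C]
    [Module.Flat B C] [Group G] [Finite G] [MulSemiringAction G C] [IsGaloisGroup G A C]
    {H : Subgroup G} [IsGaloisGroup H B C] {Q : Ideal C} [Q.IsPrime]
    [PerfectField (Q.under A).ResidueField] [PerfectField (Q.under B).ResidueField]
    (h : Q.inertia G ≤ H) : (Q.under B).ramificationIdx A = 1 := by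
  have hcard : Nat.card (Q.inertia H) = Nat.card (Q.inertia G) := by
    have hsub : Q.inertia H = (Q.inertia G).subgroupOf H :=
      (AddSubgroup.subgroupOf_inertia _ H).symm
    rw [hsub, Nat.card_congr (Subgroup.subgroupOfEquivOfLe h).toEquiv]
  have htower := Ideal.ramificationIdx_tower (R := A) (Q.under B) Q
  rw [← card_inertia_eq_ramificationIdx G Q, ← card_inertia_eq_ramificationIdx H Q, hcard] at htower
  exact Nat.eq_of_mul_eq_mul_right Nat.card_pos (by rw [one_mul, ← htower])

theorem finrank_eq_one_of_inertia_le {K G : Type*} [Field K] [NumberField K] [Group G] [Finite G]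
    [MulSemiringAction G K] [IsGaloisGroup G ℚ K] {H : Subgroup G} {F : Type*} [Field F]
    [NumberField F] [Algebra F K] [IsGaloisGroup H F K]
    (h : ∀ m : MaximalSpectrum (𝓞 K), m.asIdeal.inertia G ≤ H) :
    Module.finrank ℚ F = 1 := by
  by_contra hF
  obtain ⟨P, hP, hram⟩ := exists_not_isUnramifiedAt_int (𝒪 := 𝓞 F) hF
  obtain ⟨Q, hQ, hQP⟩ := Ideal.exists_maximal_ideal_liesOver_of_isIntegral (S := 𝓞 K) P
  obtain rfl : P = Q.under (𝓞 F) := hQP.over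
  have : IsGaloisGroup H (𝓞 F) (𝓞 K) := IsGaloisGroup.of_isFractionRing H (𝓞 F) (𝓞 K) F K
  exact hram (Ideal.ramificationIdx_eq_one_iff.1
    (ramificationIdx_eq_one_of_inertia_le (h ⟨Q, hQ⟩)))

theorem iSup_inertia_eq_top (K G : Type*) [Field K] [NumberField K] [Group G] [Finite G]
    [MulSemiringAction G K] [IsGaloisGroup G ℚ K] :
    ⨆ m : MaximalSpectrum (𝓞 K), m.asIdeal.inertia G = ⊤ := by
  set H : Subgroup G := ⨆ m : MaximalSpectrum (𝓞 K), m.asIdeal.inertia G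
  let F : IntermediateField ℚ K := FixedPoints.intermediateField H
  have hF : Module.finrank ℚ F = 1 := finrank_eq_one_of_inertia_le
    (le_iSup fun m : MaximalSpectrum (𝓞 K) ↦ m.asIdeal.inertia G)
  refine H.card_eq_iff_eq_top.1 ?_
  rw [IsGaloisGroup.card_eq_finrank H F K, IsGaloisGroup.card_eq_finrank G ℚ K,
    ← Module.finrank_mul_finrank ℚ F K, hF, one_mul]

end Inertia

section IntegralRoots

variable {K : Type*} [Field K] {f : ℤ[X]}

theorem splits_map_ringOfIntegers (hf : f.Monic) (hs : (f.map (algebraMap ℤ K)).Splits) :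
    (f.map (algebraMap ℤ (𝓞 K))).Splits := by
  rw [IsScalarTower.algebraMap_eq ℤ (𝓞 K) K, ← Polynomial.map_map] at hs
  refine hs.of_splits_map_of_injective RingOfIntegers.coe_injective fun a ha ↦ ?_
  rw [Polynomial.map_map, ← IsScalarTower.algebraMap_eq, mem_roots', IsRoot, eval_map] at ha
  exact ⟨⟨a, f, hf, ha.2⟩, rfl⟩

theorem image_coe_rootSet_ringOfIntegers (hf : f.Monic) (hs : (f.map (algebraMap ℤ K)).Splits) :
    ((↑) : 𝓞 K → K) '' f.rootSet (𝓞 K) = f.rootSet K :=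
  (splits_map_ringOfIntegers hf hs).image_rootSet_of_map_ne_zero
    (IsScalarTower.toAlgHom ℤ (𝓞 K) K) (hf.map _).ne_zero

theorem natCard_rootSet_ringOfIntegers_of_irreducible [CharZero K] (hf : f.Monic)
    (hirr : Irreducible f) (hs : (f.map (algebraMap ℤ K)).Splits) :
    Nat.card (f.rootSet (𝓞 K)) = f.natDegree := by
  have hsep : (f.map (algebraMap ℤ ℚ)).Separable :=
    (hf.irreducible_iff_irreducible_map_fraction_map.1 hirr).separable
  have hs' : ((f.map (algebraMap ℤ ℚ)).map (algebraMap ℚ K)).Splits := by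
    rwa [Polynomial.map_map, ← IsScalarTower.algebraMap_eq]
  rw [Nat.card_coe_set_eq, ← Set.ncard_image_of_injective _ RingOfIntegers.coe_injective,
    image_coe_rootSet_ringOfIntegers hf hs, ← rootSet_map_algebraMap (S := ℚ),
    ← hf.natDegree_map (algebraMap ℤ ℚ), ← card_rootSet_eq_natDegree hsep hs',
    ← Nat.card_coe_set_eq, Nat.card_eq_fintype_card]

theorem isPretransitive_rootSet_ringOfIntegers_of_irreducible [CharZero K] [IsGalois ℚ K]
    (hf : f.Monic) (hirr : Irreducible f) :
    MulAction.IsPretransitive Gal(K/ℚ) (f.rootSet (𝓞 K)) := by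
  refine ⟨fun ⟨x, hx⟩ ⟨y, hy⟩ ↦ ?_⟩
  have haeval {z : 𝓞 K} (hz : z ∈ f.rootSet (𝓞 K)) :
      aeval (z : K) (f.map (algebraMap ℤ ℚ)) = 0 := by
    rw [aeval_map_algebraMap, aeval_algebraMap_apply, aeval_eq_zero_of_mem_rootSet hz, map_zero]
  have hmin : f.map (algebraMap ℤ ℚ) = minpoly ℚ (y : K) := minpoly.eq_of_irreducible_of_monic
    (hf.irreducible_iff_irreducible_map_fraction_map.1 hirr) (haeval hy) (hf.map _)
  obtain ⟨σ, hσ⟩ := minpoly.exists_algEquiv_of_root (x := (x : K))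
    (Algebra.IsAlgebraic.isAlgebraic (y : K)) (hmin ▸ haeval hx)
  exact ⟨σ, Subtype.ext (RingOfIntegers.ext hσ)⟩

theorem injective_toPermHom_rootSet_ringOfIntegers [CharZero K]
    [IsSplittingField ℚ K (f.map (algebraMap ℤ ℚ))] (hf : f.Monic)
    (hs : (f.map (algebraMap ℤ K)).Splits) :
    Function.Injective (MulAction.toPermHom Gal(K/ℚ) (f.rootSet (𝓞 K))) := by
  refine fun σ τ h ↦ AlgEquiv.coe_toAlgHom_injective <| AlgHom.ext_of_adjoin_eq_top
    (IsSplittingField.adjoin_rootSet K (f.map (algebraMap ℤ ℚ))) ?_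
  rw [rootSet_map_algebraMap, ← image_coe_rootSet_ringOfIntegers hf hs]
  rintro _ ⟨x, hx, rfl⟩
  exact congrArg (fun y : f.rootSet (𝓞 K) ↦ ((y : 𝓞 K) : K)) (Equiv.congr_fun h ⟨x, hx⟩)

theorem surjective_toPermHom_rootSet_ringOfIntegers [NumberField K] [IsGalois ℚ K] {g : ℤ[X]}
    (hf : f.Monic) (hirr : Irreducible f) (hs : (f.map (algebraMap ℤ K)).Splits) (hg : g.Monic)
    (hdeg : g.natDegree ≤ 1) (h : g ∈ Ideal.span {f, derivative f}) :
    Function.Surjective (MulAction.toPermHom Gal(K/ℚ) (f.rootSet (𝓞 K))) := by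
  have hsO := splits_map_ringOfIntegers hf hs
  have := isPretransitive_rootSet_ringOfIntegers_of_irreducible (K := K) hf hirr
  refine hsO.surjective_toPermHom_of_iSup_inertia_eq_top (fun m ↦ ?_) (iSup_inertia_eq_top K _)
  have hsm : (f.map (algebraMap ℤ (𝓞 K ⧸ m.asIdeal))).Splits := by
    simpa only [Polynomial.map_map, ← IsScalarTower.algebraMap_eq] using
      hsO.map (algebraMap (𝓞 K) (𝓞 K ⧸ m.asIdeal))
  calc (f.rootSet (𝓞 K)).ncard = f.natDegree := by
        rw [← Nat.card_coe_set_eq, natCard_rootSet_ringOfIntegers_of_irreducible hf hirr hs]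
    _ ≤ (f.rootSet (𝓞 K ⧸ m.asIdeal)).ncard + g.natDegree :=
        natDegree_le_ncard_rootSet_add_natDegree_of_mem_span hf hg hsm h
    _ ≤ (f.rootSet (𝓞 K ⧸ m.asIdeal)).ncard + 1 := by gcongr

end IntegralRoots

theorem nonempty_gal_mulEquiv_perm_of_mem_span {f g : ℤ[X]} (hf : f.Monic) (hirr : Irreducible f)
    (hg : g.Monic) (hdeg : g.natDegree ≤ 1) (h : g ∈ Ideal.span {f, derivative f}) :
    Nonempty ((f.map (algebraMap ℤ ℚ)).Gal ≃* Equiv.Perm (Fin f.natDegree)) := by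
  let K := (f.map (algebraMap ℤ ℚ)).SplittingField
  have : NumberField K := by constructor
  have : IsSplittingField ℚ K (f.map (algebraMap ℤ ℚ)) := IsSplittingField.splittingField _
  have : IsGalois ℚ K := IsGalois.of_separable_splitting_field
    (hf.irreducible_iff_irreducible_map_fraction_map.1 hirr).separable
  have hs : (f.map (algebraMap ℤ K)).Splits := by
    simpa only [Polynomial.map_map, ← IsScalarTower.algebraMap_eq] using
      IsSplittingField.splits K (f.map (algebraMap ℤ ℚ))
  have hbij : Function.Bijective (MulAction.toPermHom Gal(K/ℚ) (f.rootSet (𝓞 K))) :=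
    ⟨injective_toPermHom_rootSet_ringOfIntegers hf hs,
      surjective_toPermHom_rootSet_ringOfIntegers hf hirr hs hg hdeg h⟩
  have hcard := natCard_rootSet_ringOfIntegers_of_irreducible hf hirr hs
  exact ⟨(MulEquiv.ofBijective _ hbij).trans (Finite.equivFinOfCardEq hcard).permCongrHom⟩

theorem splits_of_irreducible_of_aeval_eq_zero {F L : Type*} [Field F] [Field L] [Algebra F L]
    [Normal F L] {f : F[X]} (hf : Irreducible f) {z : L} (hz : aeval z f = 0) :
    (f.map (algebraMap F L)).Splits := by
  have hz_int : IsIntegral F z := Algebra.IsIntegral.isIntegral z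
  have hdvd : f ∣ minpoly F z := (minpoly.irreducible hz_int).dvd_symm hf (minpoly.dvd F z hz)
  exact (Normal.splits ‹_› z).of_dvd
    (Polynomial.map_ne_zero (minpoly.ne_zero hz_int)) (Polynomial.map_dvd _ hdvd)

theorem isMulCommutative_gal_of_aeval_eq_zero {F L : Type*} [Field F] [Field L] [Algebra F L]
    [IsAbelianGalois F L] {f : F[X]} (hf : Irreducible f) {z : L} (hz : aeval z f = 0) :
    IsMulCommutative f.Gal :=
  (IsAbelianGalois.of_algHom (IsSplittingField.lift f.SplittingField f
    (splits_of_irreducible_of_aeval_eq_zero hf hz))).toIsMulCommutative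

theorem isMulCommutative_gal_of_mem_adjoin_of_isPrimitiveRoot {F E : Type*} [Field F]
    [Field E] [Algebra F E] {f : F[X]} (hf : Irreducible f) {z ζ : E} {n : ℕ} [NeZero n]
    (hζ : IsPrimitiveRoot ζ n) (hz : z ∈ Algebra.adjoin F {ζ}) (hzf : aeval z f = 0) :
    IsMulCommutative f.Gal := by
  let L := IntermediateField.adjoin F {ζ}
  have : IsCyclotomicExtension {n} F L :=
    (IntermediateField.isCyclotomicExtension_singleton_iff_eq_adjoin n F E L hζ).2 rfl
  have : IsAbelianGalois F L := IsCyclotomicExtension.isAbelianGalois {n} F L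
  have hzL : aeval (⟨z, IntermediateField.algebra_adjoin_le_adjoin F _ hz⟩ : L) f = 0 := by
    apply (algebraMap L E).injective
    rw [← aeval_algebraMap_apply, map_zero]
    exact hzf
  exact isMulCommutative_gal_of_aeval_eq_zero hf hzL

/-- The polynomial `r₂` of the statement, with integer coefficients. -/
noncomputable def rTwo : ℤ[X] :=
  X ^ 6 - 13 * X ^ 5 + 63 * X ^ 4 - 140 * X ^ 3 + 142 * X ^ 2 - 59 * X + 7

theorem natDegree_rTwo : rTwo.natDegree = 6 := by
  rw [rTwo]; compute_degree!

theorem monic_rTwo : rTwo.Monic := by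
  rw [rTwo]; monicity!

theorem map_rTwo_rat : rTwo.map (algebraMap ℤ ℚ) =
    X ^ 6 - 13 * X ^ 5 + 63 * X ^ 4 - 140 * X ^ 3 + 142 * X ^ 2 - 59 * X + 7 := by
  simp [rTwo]

theorem map_rTwo_zmod_two : rTwo.map (Int.castRingHom (ZMod 2)) =
    X ^ 6 + X ^ 5 + X ^ 4 + X + 1 := by
  have h2 : (2 : (ZMod 2)[X]) = 0 := CharTwo.two_eq_zero
  simp only [rTwo, Polynomial.map_add, Polynomial.map_sub, Polynomial.map_mul, Polynomial.map_pow,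
    map_X, Polynomial.map_ofNat]
  linear_combination (-7 * X ^ 5 + 31 * X ^ 4 - 70 * X ^ 3 + 71 * X ^ 2 - 30 * X + 3) * h2

theorem irreducible_map_rTwo_zmod_two : Irreducible (rTwo.map (Int.castRingHom (ZMod 2))) := by
  have hdeg : (rTwo.map (Int.castRingHom (ZMod 2))).natDegree = 6 := by
    rw [monic_rTwo.natDegree_map, natDegree_rTwo]
  refine irreducible_of_isCoprime_X_pow_card_pow_sub_X (by rw [hdeg]; decide) fun d hd ↦ ?_
  rw [hdeg, Finset.mem_Ioc] at hd
  rw [Nat.card_zmod, map_rTwo_zmod_two]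
  obtain rfl | rfl | rfl : d = 1 ∨ d = 2 ∨ d = 3 := by lia
  · exact ⟨1, X ^ 4 + X ^ 2 + X + 1, by ring_nf; reduce_mod_char⟩
  · exact ⟨X ^ 3 + X + 1, X ^ 5 + X ^ 4 + X ^ 2 + X, by ring_nf; reduce_mod_char⟩
  · exact ⟨X ^ 7 + X ^ 6 + X ^ 3 + X + 1, X ^ 5 + X ^ 2 + X, by ring_nf; reduce_mod_char⟩

theorem irreducible_rTwo : Irreducible rTwo :=
  monic_rTwo.irreducible_of_irreducible_map _ _ irreducible_map_rTwo_zmod_two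

/- The discriminant of `rTwo` is `1471 * 5171`, which is squarefree, so `ℤ[X]` modulo `rTwo` and its
derivative is cyclic of order `1471 * 5171 = 7606541`; `1627278` is the image of `X`. -/
theorem X_sub_C_mem_span_rTwo_derivative :
    X - C 1627278 ∈ Ideal.span {rTwo, derivative rTwo} := by
  rw [Ideal.mem_span_pair]
  refine ⟨561762 * X ^ 4 - 5312403 * X ^ 3 + 16912260 * X ^ 2 - 20333054 * X + 6612206,
    -93627 * X ^ 5 + 1088259 * X ^ 4 - 4505611 * X ^ 3 + 7848530 * X ^ 2 - 5115607 * X + 812080, ?_⟩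
  simp only [rTwo, derivative_add, derivative_sub, derivative_mul, derivative_X_pow, derivative_X,
    derivative_ofNat, map_ofNat, Nat.cast_ofNat]
  ring

/-- The polynomial `r₂(x) = x⁶ − 13x⁵ + 63x⁴ − 140x³ + 142x² − 59x + 7` is irreducible
over `ℚ` and its Galois group over `ℚ` is the full symmetric group `S₆`; in particular the
Galois group is non-abelian, so its roots are not cyclotomic integers. -/
theorem stmt_15 :
    Irreducible (X ^ 6 - 13 * X ^ 5 + 63 * X ^ 4 - 140 * X ^ 3 + 142 * X ^ 2 - 59 * X + 7 :
      Polynomial ℚ) ∧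
    Nonempty ((X ^ 6 - 13 * X ^ 5 + 63 * X ^ 4 - 140 * X ^ 3 + 142 * X ^ 2 - 59 * X + 7 :
      Polynomial ℚ).Gal ≃* Equiv.Perm (Fin 6)) ∧
    (∀ z : ℂ, Polynomial.aeval z
        (X ^ 6 - 13 * X ^ 5 + 63 * X ^ 4 - 140 * X ^ 3 + 142 * X ^ 2 - 59 * X + 7 :
          Polynomial ℚ) = 0 →
      ¬ ∃ (n : ℕ) (ζ : ℂ), 0 < n ∧ IsPrimitiveRoot ζ n ∧
        z ∈ Algebra.adjoin ℚ ({ζ} : Set ℂ)) := by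
  rw [← map_rTwo_rat]
  have hirr : Irreducible (rTwo.map (algebraMap ℤ ℚ)) :=
    monic_rTwo.irreducible_iff_irreducible_map_fraction_map.1 irreducible_rTwo
  have hgal : Nonempty ((rTwo.map (algebraMap ℤ ℚ)).Gal ≃* Equiv.Perm (Fin 6)) :=
    natDegree_rTwo ▸ nonempty_gal_mulEquiv_perm_of_mem_span monic_rTwo irreducible_rTwo
      (monic_X_sub_C 1627278) (natDegree_X_sub_C_le _) X_sub_C_mem_span_rTwo_derivative
  refine ⟨hirr, hgal, ?_⟩
  rintro z hz ⟨n, ζ, hn, hζ, hzζ⟩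
  obtain ⟨e⟩ := hgal
  have : NeZero n := ⟨hn.ne'⟩
  have hcomm : IsMulCommutative (Equiv.Perm (Fin 6)) :=
    Function.Surjective.mul_comm (f := e.toMulHom) e.surjective
      (isMulCommutative_gal_of_mem_adjoin_of_isPrimitiveRoot hirr hζ hzζ hz)
  exact absurd (Equiv.Perm.isMulCommutative_iff_card_le_two.1 hcomm) (by simp)
end
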